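/- arXiv:1912.00135 — 2 statements merged into one kernel-verified Lean document; each statement's English description precedes it below -/
import Mathlib

section
/- Let N ≥ 2 be an integer, q ∈ (1, ∞), and c > 0. There exists a constant C = C(N, q, c) > 0 with the following property. Let m : ℝ^{N−1} → ℂ be smooth on ℝ^{N−1} ∖ {0} and satisfy ‖D^n m(ξ')‖ ≤ c ‖ξ'‖^{−n} for all ξ' ≠ 0 and all integers 0 ≤ n ≤ N + 1. Then for every sign ς ∈ {+1, −1} and every Schwartz function f ∈ 𝓢(ℝ^N; ℂ), the function M f defined for x = (x', x_N) with x_N > 0 by M f(x) = ∫_0^∞ (2π)^{−(N−1)} ∫_{ℝ^{N−1}} e^{i x'·ξ'} m(ξ') ‖ξ'‖ e^{−‖ξ'‖(x_N + y_N)} f̂(ξ', ς y_N) dξ' dy_N, where f̂(ξ', s) = ∫_{ℝ^{N−1}} e^{−i z'·ξ'} f(z', s) dz', satisfies ‖M f‖_{L^q(ℝ^N_+)} ≤ C ‖f‖_{L^q(ℝ^N_ς)}, where ℝ^N_ς = {x : ς x_N > 0}. -/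
open Real MeasureTheory
open scoped RealInnerProductSpace

/-- The `L^p` norm (real exponent `p`) of `f` with respect to the measure `μ`. -/
noncomputable def LqNorm {α : Type*} [MeasurableSpace α] {E : Type*} [NormedAddCommGroup E]
    (μ : Measure α) (p : ℝ) (f : α → E) : ℝ :=
  (∫ x, ‖f x‖ ^ p ∂μ) ^ (1 / p)

open scoped ContDiff

section SymbolPart
variable {V : Type*} [NormedAddCommGroup V] [InnerProductSpace ℝ V]

lemma uniq0 : UniqueDiffOn ℝ ({0}ᶜ : Set V) := isOpen_compl_singleton.uniqueDiffOn

lemma bounded_on_annulus [FiniteDimensional ℝ V] {F : Type*} [NormedAddCommGroup F] [NormedSpace ℝ F]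
    (f : V → F) (hf : ContDiffOn ℝ ∞ f {0}ᶜ) (M : ℕ) :
    ∃ B : ℝ, 1 ≤ B ∧ ∀ n ≤ M, ∀ η : V, 1 ≤ ‖η‖ → ‖η‖ ≤ 3 →
      ‖iteratedFDerivWithin ℝ n f {0}ᶜ η‖ ≤ B := by
  have hK : IsCompact {η : V | 1 ≤ ‖η‖ ∧ ‖η‖ ≤ 3} := by
    have : {η : V | 1 ≤ ‖η‖ ∧ ‖η‖ ≤ 3} = Metric.closedBall 0 3 ∩ {η : V | 1 ≤ ‖η‖} := by
      ext; simp [and_comm]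
    rw [this]
    exact (isCompact_closedBall _ _).inter_right (isClosed_le continuous_const continuous_norm)
  have hsub : {η : V | 1 ≤ ‖η‖ ∧ ‖η‖ ≤ 3} ⊆ {0}ᶜ := by
    rintro η ⟨h1, _⟩ h0
    simp only [Set.mem_singleton_iff] at h0
    simp [h0] at h1
    linarith
  have key : ∀ n : ℕ, ∃ B : ℝ, ∀ η ∈ {η : V | 1 ≤ ‖η‖ ∧ ‖η‖ ≤ 3},
      ‖iteratedFDerivWithin ℝ n f {0}ᶜ η‖ ≤ B := by
    intro n
    apply hK.exists_bound_of_continuousOn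
    exact (hf.continuousOn_iteratedFDerivWithin (by exact_mod_cast le_top) uniq0).mono hsub
  choose B hB using key
  refine ⟨1 + ∑ n ∈ Finset.range (M+1), |B n|, ?_, ?_⟩
  · have : 0 ≤ ∑ n ∈ Finset.range (M+1), |B n| := Finset.sum_nonneg fun _ _ => abs_nonneg _
    linarith
  · intro n hn η h1 h3
    have h := hB n η ⟨h1, h3⟩
    have : |B n| ≤ ∑ n ∈ Finset.range (M+1), |B n| :=
      Finset.single_le_sum (f := fun n => |B n|) (fun _ _ => abs_nonneg _)
        (Finset.mem_range.2 (by omega))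
    linarith [le_abs_self (B n)]

lemma contDiffOn_norm0 : ContDiffOn ℝ ∞ (fun η : V => ‖η‖) {0}ᶜ := fun x hx =>
  (contDiffAt_norm ℝ (by simpa using hx)).contDiffWithinAt

lemma exp_bound [FiniteDimensional ℝ V] (M : ℕ) :
    ∃ B : ℝ, 1 ≤ B ∧ ∀ T : ℝ, 0 ≤ T → ∀ n ≤ M, ∀ η : V, 1 ≤ ‖η‖ → ‖η‖ ≤ 3 →
      ‖iteratedFDerivWithin ℝ n (fun η : V => rexp (-T * ‖η‖)) {0}ᶜ η‖ ≤ B * rexp (-T / 2) := by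
  obtain ⟨D, hD1, hD⟩ := bounded_on_annulus (fun η : V => ‖η‖) contDiffOn_norm0 M
  refine ⟨M.factorial * (2 ^ M * M.factorial) * D ^ M, ?_, ?_⟩
  · have h1 : (1:ℝ) ≤ M.factorial := by exact_mod_cast M.factorial_pos
    have h2 : (1:ℝ) ≤ 2 ^ M := one_le_pow₀ (by norm_num)
    have h3 : 1 ≤ D ^ M := one_le_pow₀ hD1
    have := one_le_mul_of_one_le_of_one_le h2 h1
    have := one_le_mul_of_one_le_of_one_le h1 this
    exact one_le_mul_of_one_le_of_one_le this h3
  intro T hT n hn η h1 h3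
  have hη : η ∈ ({0}ᶜ : Set V) := by
    intro h0
    simp only [Set.mem_singleton_iff] at h0
    simp [h0] at h1
    linarith
  have hfac : ∀ i, i ≤ n → (i.factorial : ℝ) ≤ M.factorial := fun i hi => by
    exact_mod_cast Nat.factorial_le (hi.trans hn)
  have := norm_iteratedFDerivWithin_comp_le (𝕜 := ℝ) (g := fun r : ℝ => rexp (-T * r))
    (f := fun η : V => ‖η‖) (n := n) (s := {0}ᶜ) (t := Set.univ) (x := η) (N := ∞)
    (C := (2 ^ M * M.factorial) * rexp (-T/2)) (D := D)
    (by fun_prop) contDiffOn_norm0 (by exact_mod_cast le_top) uniqueDiffOn_univ uniq0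
    (fun _ _ => trivial) hη ?_ ?_
  · refine this.trans ?_
    have e1 := hfac n le_rfl
    have e2 : D ^ n ≤ D ^ M := pow_le_pow_right₀ hD1 hn
    have : 0 ≤ D ^ n := by positivity
    calc _ ≤ (M.factorial : ℝ) * (2 ^ M * M.factorial * rexp (-T / 2)) * D ^ M := by gcongr
      _ = _ := by ring
  · intro i hi
    rw [iteratedFDerivWithin_univ, norm_iteratedFDeriv_eq_norm_iteratedDeriv,
      iteratedDeriv_exp_const_mul]
    simp only [norm_mul, norm_pow, norm_neg, Real.norm_eq_abs, abs_of_nonneg hT, Real.abs_exp]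
    have e1 : (T/2) ^ i ≤ i.factorial * rexp (T/2) := by
      have := Real.pow_div_factorial_le_exp (T/2) (by linarith) i
      rwa [div_le_iff₀ (by positivity), mul_comm] at this
    have e2 : T ^ i = 2 ^ i * (T/2)^i := by rw [← mul_pow]; congr 1; ring
    have e3 : rexp (-T * ‖η‖) ≤ rexp (-T/2) * rexp (-(T/2)) := by
      rw [← Real.exp_add]; apply Real.exp_le_exp.2; nlinarith
    calc T ^ i * rexp (-T * ‖η‖) ≤ (2 ^ i * (i.factorial * rexp (T/2))) * (rexp (-T/2) * rexp (-(T/2))) := by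
          rw [e2]; gcongr
      _ = (2 ^ i * i.factorial) * rexp (-T/2) * (rexp (T/2) * rexp (-(T/2))) := by ring
      _ = (2 ^ i * i.factorial) * rexp (-T/2) := by rw [← Real.exp_add]; simp
      _ ≤ _ := by
          have := hfac i hi
          have : (2:ℝ)^i ≤ 2 ^ M := pow_le_pow_right₀ (by norm_num) (hi.trans hn)
          gcongr
  · intro i hi1 hi
    exact (hD i (hi.trans hn) η h1 h3).trans (le_self_pow₀ hD1 (by omega))

lemma smul_bound {F : Type*} [NormedAddCommGroup F] [NormedSpace ℝ F] {f : V → ℝ} {g : V → F}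
    (hf : ContDiffOn ℝ ∞ f {0}ᶜ) (hg : ContDiffOn ℝ ∞ g {0}ᶜ) {x : V} (hx : x ∈ ({0}ᶜ : Set V))
    {M : ℕ} {A B : ℝ} (hA0 : 0 ≤ A)
    (hA : ∀ i ≤ M, ‖iteratedFDerivWithin ℝ i f {0}ᶜ x‖ ≤ A)
    (hB : ∀ i ≤ M, ‖iteratedFDerivWithin ℝ i g {0}ᶜ x‖ ≤ B) (n : ℕ) (hn : n ≤ M) :
    ‖iteratedFDerivWithin ℝ n (fun y => f y • g y) {0}ᶜ x‖ ≤ 2 ^ M * A * B := by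
  have hB0 : 0 ≤ B := (norm_nonneg _).trans (hB 0 (Nat.zero_le _))
  refine (norm_iteratedFDerivWithin_smul_le hf hg uniq0 hx (n := n) (by exact_mod_cast le_top)).trans ?_
  calc _ ≤ ∑ i ∈ Finset.range (n+1), (n.choose i : ℝ) * A * B := by
        apply Finset.sum_le_sum
        intro i hi
        have : i ≤ n := by simpa [Nat.lt_succ_iff] using hi
        have h1 := hA i (this.trans hn)
        have h2 := hB (n - i) (by omega)
        gcongr
    _ = 2 ^ n * A * B := by
        rw [← Finset.sum_mul, ← Finset.sum_mul]
        have := Nat.sum_range_choose n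
        congr 2
        exact_mod_cast this
    _ ≤ _ := by
        have : (2:ℝ)^n ≤ 2 ^ M := pow_le_pow_right₀ (by norm_num) hn
        gcongr

/-- the fixed bump on the line -/
noncomputable def bmp : ContDiffBump (2 : ℝ) := ⟨1/2, 1, by norm_num, by norm_num⟩

lemma bmp_zero_of {r : ℝ} (h : r ≤ 1 ∨ 3 ≤ r) : bmp r = 0 := by
  apply ContDiffBump.zero_of_le_dist
  change (1:ℝ) ≤ dist r 2
  rw [Real.dist_eq]
  rcases h with h | h
  · rw [abs_of_nonpos] <;> linarith
  · rw [abs_of_nonneg] <;> linarith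

lemma H_contDiff (T : ℝ) (μ : V → ℂ) (hμ : ContDiffOn ℝ ∞ μ {0}ᶜ) :
    ContDiff ℝ ∞ (fun η : V => (bmp ‖η‖ * ‖η‖) • (rexp (-T * ‖η‖) • μ η)) := by
  rw [contDiff_iff_contDiffAt]
  intro x
  by_cases hx : x = 0
  · subst hx
    have : (fun η : V => (bmp ‖η‖ * ‖η‖) • (rexp (-T * ‖η‖) • μ η)) =ᶠ[nhds 0] fun _ => 0 := by
      filter_upwards [Metric.ball_mem_nhds (0:V) one_pos] with η hη
      rw [bmp_zero_of]; · simp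
      left; simp at hη; exact hη.le
    exact contDiffAt_const.congr_of_eventuallyEq this
  · have hn : ContDiffAt ℝ ∞ (fun η : V => ‖η‖) x := contDiffAt_norm ℝ hx
    have hm : ContDiffAt ℝ ∞ μ x := hμ.contDiffAt (isOpen_compl_singleton.mem_nhds hx)
    have hb : ContDiffAt ℝ ∞ (fun η : V => bmp ‖η‖) x := bmp.contDiff.contDiffAt.comp x hn
    have he : ContDiffAt ℝ ∞ (fun η : V => rexp (-T * ‖η‖)) x :=
      (Real.contDiff_exp.contDiffAt).comp x (contDiffAt_const.mul hn)
    exact (hb.mul hn).smul (he.smul hm)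

lemma H_bound [FiniteDimensional ℝ V] (M : ℕ) :
    ∃ B : ℝ, 0 ≤ B ∧ ∀ (c T : ℝ), 0 ≤ c → 0 ≤ T → ∀ μ : V → ℂ, ContDiffOn ℝ ∞ μ {0}ᶜ →
      (∀ n ≤ M, ∀ η : V, 1 ≤ ‖η‖ → ‖η‖ ≤ 3 → ‖iteratedFDeriv ℝ n μ η‖ ≤ c) → ∀ n ≤ M, ∀ η : V,
      ‖iteratedFDeriv ℝ n (fun η : V => (bmp ‖η‖ * ‖η‖) • (rexp (-T * ‖η‖) • μ η)) η‖ ≤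
        (Metric.closedBall (0:V) 3).indicator (fun _ => B * c * rexp (-T/2)) η := by
  have hbC : ContDiffOn ℝ ∞ (fun η : V => bmp ‖η‖ * ‖η‖) {0}ᶜ :=
    (bmp.contDiff.comp_contDiffOn contDiffOn_norm0).mul contDiffOn_norm0
  obtain ⟨B1, hB1, h1⟩ := bounded_on_annulus (fun η : V => bmp ‖η‖ * ‖η‖) hbC M
  obtain ⟨B2, hB2, h2⟩ := exp_bound (V := V) M
  refine ⟨2 ^ M * B1 * (2 ^ M * B2), by positivity, ?_⟩
  intro c T hc0 hT μ hμ hc n hn η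
  by_cases hη : 1 ≤ ‖η‖ ∧ ‖η‖ ≤ 3
  · have hx : η ∈ ({0}ᶜ : Set V) := by
      intro h0
      simp only [Set.mem_singleton_iff] at h0
      have := hη.1
      rw [h0, norm_zero] at this
      linarith
    have heC : ContDiffOn ℝ ∞ (fun η : V => rexp (-T * ‖η‖)) {0}ᶜ :=
      Real.contDiff_exp.comp_contDiffOn (contDiffOn_const.mul contDiffOn_norm0)
    rw [Set.indicator_of_mem (by simpa using hη.2),
      ← iteratedFDerivWithin_of_isOpen n isOpen_compl_singleton hx]
    have s1 := smul_bound heC hμ hx (M := M) (A := B2 * rexp (-T/2)) (B := c) (by positivity)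
      (fun i hi => h2 T hT i hi η hη.1 hη.2)
      (fun i hi => by
        rw [iteratedFDerivWithin_of_isOpen i isOpen_compl_singleton hx]
        exact hc i hi η hη.1 hη.2)
    have s2 := smul_bound hbC (heC.smul hμ) hx (M := M) (A := B1) (by positivity)
      (fun i hi => h1 i hi η hη.1 hη.2) s1 n hn
    refine s2.trans (le_of_eq ?_)
    ring
  · have hz : iteratedFDeriv ℝ n (fun η : V => (bmp ‖η‖ * ‖η‖) • (rexp (-T * ‖η‖) • μ η)) η = 0 := by
      by_contra hne
      have hsup : η ∈ tsupport (fun η : V => (bmp ‖η‖ * ‖η‖) • (rexp (-T * ‖η‖) • μ η)) :=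
        support_iteratedFDeriv_subset n hne
      apply hη
      have hcl : IsClosed {η : V | 1 ≤ ‖η‖ ∧ ‖η‖ ≤ 3} :=
        (isClosed_le continuous_const continuous_norm).inter
          (isClosed_le continuous_norm continuous_const)
      refine closure_minimal ?_ hcl hsup
      intro y hy
      by_contra hcon
      apply hy
      have : bmp ‖y‖ = 0 := by
        apply bmp_zero_of
        by_contra! h
        exact hcon ⟨h.1.le, h.2.le⟩
      simp [this]
    rw [hz, norm_zero]
    by_cases h3 : η ∈ Metric.closedBall (0:V) 3
    · rw [Set.indicator_of_mem h3]
      positivity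
    · rw [Set.indicator_of_notMem h3]

end SymbolPart

section FourierPart
variable {V : Type*} [NormedAddCommGroup V] [InnerProductSpace ℝ V] [FiniteDimensional ℝ V]
  [MeasurableSpace V] [BorelSpace V]

lemma H_fourier (M : ℕ) :
    ∃ B : ℝ, 0 ≤ B ∧ ∀ (c T : ℝ), 0 ≤ c → 0 ≤ T → ∀ μ : V → ℂ, ContDiffOn ℝ ∞ μ {0}ᶜ →
      (∀ n ≤ M, ∀ η : V, 1 ≤ ‖η‖ → ‖η‖ ≤ 3 → ‖iteratedFDeriv ℝ n μ η‖ ≤ c) → ∀ y : V,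
      ‖∫ η : V, Complex.exp (Complex.I * (⟪y, η⟫ : ℂ)) *
        ((bmp ‖η‖ * ‖η‖) • (rexp (-T * ‖η‖) • μ η))‖ ≤
        B * c * rexp (-T/2) * ((1 + ‖y‖) ^ M)⁻¹ := by
  obtain ⟨B, hB0, hB⟩ := H_bound (V := V) M
  set v : ℝ := (volume (Metric.closedBall (0:V) 3)).toReal with hv
  have hv0 : 0 ≤ v := ENNReal.toReal_nonneg
  refine ⟨2 ^ (M - 1) * (B * v + (2 * π) ^ M * (2 ^ M * ((M + 1) * (B * v)))), by positivity, ?_⟩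
  intro c T hc hT μ hμ hμc y
  set H : V → ℂ := fun η : V => (bmp ‖η‖ * ‖η‖) • (rexp (-T * ‖η‖) • μ η) with hH
  have hHb := hB c T hc hT μ hμ hμc
  have hHs : ContDiff ℝ ∞ H := H_contDiff T μ hμ
  have hind : Integrable ((Metric.closedBall (0:V) 3).indicator
      (fun _ => B * c * rexp (-T/2))) := by
    rw [integrable_indicator_iff Metric.isClosed_closedBall.measurableSet]
    exact integrableOn_const (by exact measure_closedBall_lt_top.ne) enorm_ne_top
  have hint : ∀ n ≤ M, Integrable (fun w => ‖iteratedFDeriv ℝ n H w‖) := by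
    intro n hn
    refine hind.mono' ?_ ?_
    · exact ((hHs.continuous_iteratedFDeriv (by exact_mod_cast le_top)).norm).aestronglyMeasurable
    · filter_upwards with w
      rw [norm_norm]
      exact hHb n hn w
  have hintle : ∀ n ≤ M, ∫ w, ‖iteratedFDeriv ℝ n H w‖ ≤ B * c * rexp (-T/2) * v := by
    intro n hn
    refine (integral_mono (hint n hn) hind (hHb n hn)).trans (le_of_eq ?_)
    rw [integral_indicator Metric.isClosed_closedBall.measurableSet, setIntegral_const]
    simp [hv, Measure.real, mul_comm]
  set w : V := -(2 * π)⁻¹ • y with hw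
  have hF : ∫ η : V, Complex.exp (Complex.I * (⟪y, η⟫ : ℂ)) * H η = FourierTransform.fourier H w := by
    rw [Real.fourier_eq]
    congr 1
    ext η
    rw [Circle.smul_def, Real.fourierChar_apply, smul_eq_mul]
    congr 2
    rw [hw, inner_smul_right, real_inner_comm]
    push_cast
    simp
    field_simp
  have hwn : ‖y‖ = 2 * π * ‖w‖ := by
    rw [hw, norm_smul, Real.norm_eq_abs, abs_neg, abs_of_pos (by positivity)]
    field_simp
  have h0 : ‖FourierTransform.fourier H w‖ ≤ B * c * rexp (-T/2) * v := by
    rw [← hF]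
    refine (norm_integral_le_integral_norm _).trans (le_trans (le_of_eq ?_) (hintle 0 (Nat.zero_le _)))
    congr 1
    ext η
    rw [norm_mul, norm_iteratedFDeriv_zero]
    have : ‖Complex.exp (Complex.I * (⟪y, η⟫ : ℂ))‖ = 1 := by
      rw [mul_comm]; exact Complex.norm_exp_ofReal_mul_I _
    rw [this, one_mul]
  have hM : ‖w‖ ^ M * ‖FourierTransform.fourier H w‖ ≤
      2 ^ M * ((M + 1) * (B * c * rexp (-T/2) * v)) := by
    have := Real.pow_mul_norm_iteratedFDeriv_fourier_le (K := 0) (N := M) (f := H)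
      (hHs.of_le (by exact_mod_cast le_top)) (by
        intro k n hk hn
        have hk : k = 0 := by simpa using hk
        subst hk
        simpa using hint n (by exact_mod_cast hn)) (k := 0) (n := M) (by simp) le_rfl w
    rw [norm_iteratedFDeriv_zero] at this
    refine this.trans ?_
    simp only [pow_zero, one_mul, Nat.cast_zero, mul_zero, zero_add]
    gcongr
    rw [Finset.sum_product]
    simp only [Finset.range_one, Finset.sum_singleton, pow_zero, one_mul]
    refine (Finset.sum_le_card_nsmul _ _ (B * c * rexp (-T/2) * v) ?_).trans ?_
    · intro n hn
      exact hintle n (by simpa [Nat.lt_succ_iff] using hn)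
    · simp
  rw [hF, ← div_eq_mul_inv, le_div_iff₀ (by positivity)]
  have hadd : (1 + ‖y‖) ^ M ≤ 2 ^ (M-1) * (1 ^ M + ‖y‖ ^ M) := add_pow_le zero_le_one (norm_nonneg _) M
  calc ‖FourierTransform.fourier H w‖ * (1 + ‖y‖) ^ M
      ≤ ‖FourierTransform.fourier H w‖ * (2 ^ (M-1) * (1 ^ M + ‖y‖ ^ M)) := by gcongr
    _ = 2 ^ (M-1) * (‖FourierTransform.fourier H w‖ + (2 * π) ^ M * (‖w‖ ^ M * ‖FourierTransform.fourier H w‖)) := by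
        rw [hwn, mul_pow, one_pow]; ring
    _ ≤ 2 ^ (M-1) * (B * c * rexp (-T/2) * v + (2 * π) ^ M * (2 ^ M * ((M + 1) * (B * c * rexp (-T/2) * v)))) := by
        gcongr
    _ = _ := by ring

omit [FiniteDimensional ℝ V] [MeasurableSpace V] [BorelSpace V] in
lemma scale_bound {m : V → ℂ} {c : ℝ} {M : ℕ} (hc : 0 ≤ c)
    (hb : ∀ ξ : V, ξ ≠ 0 → ∀ n : ℕ, n ≤ M → ‖iteratedFDeriv ℝ n m ξ‖ ≤ c * ‖ξ‖ ^ (-(n : ℝ)))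
    {u : ℝ} (hu : 0 < u) : ∀ n ≤ M, ∀ η : V, 1 ≤ ‖η‖ → ‖η‖ ≤ 3 →
      ‖iteratedFDeriv ℝ n (fun η => m (u • η)) η‖ ≤ c := by
  intro n hn η h1 h3
  let g : V ≃L[ℝ] V := ContinuousLinearEquiv.smulLeft (Units.mk0 u hu.ne')
  have hg : ∀ η, g η = u • η := fun η => rfl
  have e : iteratedFDeriv ℝ n (fun η => m (u • η)) η =
      (iteratedFDeriv ℝ n m (u • η)).compContinuousLinearMap (fun _ => (g : V →L[ℝ] V)) := by
    have := g.iteratedFDerivWithin_comp_right m uniqueDiffOn_univ (Set.mem_univ (g η)) n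
    rw [Set.preimage_univ, iteratedFDerivWithin_univ, iteratedFDerivWithin_univ] at this
    exact this
  have hgn : ‖(g : V →L[ℝ] V)‖ ≤ u := by
    apply ContinuousLinearMap.opNorm_le_bound _ hu.le
    intro x
    change ‖u • x‖ ≤ _
    rw [norm_smul, Real.norm_eq_abs, abs_of_pos hu]
  have hη : 0 < ‖η‖ := by linarith
  have hη0 : u • η ≠ 0 := smul_ne_zero hu.ne' (norm_pos_iff.1 hη)
  rw [e]
  refine (ContinuousMultilinearMap.norm_compContinuousLinearMap_le _ _).trans ?_
  have h := hb (u • η) hη0 n hn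
  rw [norm_smul, Real.norm_eq_abs, abs_of_pos hu, Real.rpow_neg (by positivity), Real.rpow_natCast] at h
  rw [Finset.prod_const, Finset.card_univ, Fintype.card_fin]
  calc _ ≤ (c * ((u * ‖η‖) ^ n)⁻¹) * u ^ n := by gcongr
    _ = c * (‖η‖ ^ n)⁻¹ := by rw [mul_pow]; field_simp
    _ ≤ c * 1 := by
        gcongr
        exact inv_le_one_of_one_le₀ (one_le_pow₀ h1)
    _ = c := mul_one _

lemma piece_bound (M : ℕ) (c : ℝ) (hc : 0 ≤ c) :
    ∃ B : ℝ, 0 ≤ B ∧ ∀ m : V → ℂ, ContDiffOn ℝ ∞ m {0}ᶜ →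
      (∀ ξ : V, ξ ≠ 0 → ∀ n : ℕ, n ≤ M → ‖iteratedFDeriv ℝ n m ξ‖ ≤ c * ‖ξ‖ ^ (-(n : ℝ))) →
      ∀ t : ℝ, 0 ≤ t → ∀ u : ℝ, 0 < u → ∀ x : V,
      ‖∫ ξ : V, (bmp (u⁻¹ * ‖ξ‖) : ℂ) * (Complex.exp (Complex.I * (⟪x, ξ⟫ : ℂ)) * m ξ * (‖ξ‖ : ℂ) *
        Complex.exp (-(‖ξ‖ : ℂ) * (t : ℂ)))‖ ≤
        B * (u ^ (Module.finrank ℝ V + 1) * rexp (-(t * u)/2) * ((1 + u * ‖x‖) ^ M)⁻¹) := by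
  obtain ⟨B, hB0, hB⟩ := H_fourier (V := V) M
  refine ⟨B * c, by positivity, ?_⟩
  intro m hm hb t ht u hu x
  have hms : ContDiffOn ℝ ∞ (fun η => m (u • η)) {0}ᶜ := by
    refine hm.comp (contDiff_const_smul u).contDiffOn ?_
    intro η hη
    exact smul_ne_zero hu.ne' hη
  have h := hB c (t * u) hc (by positivity) _ hms (scale_bound hc hb hu) (u • x)
  rw [norm_smul, Real.norm_eq_abs, abs_of_pos hu] at h
  have key := Measure.integral_comp_smul (volume : Measure V) (fun ξ : V => (bmp (u⁻¹ * ‖ξ‖) : ℂ) * (Complex.exp (Complex.I * (⟪x, ξ⟫ : ℂ)) * m ξ * (‖ξ‖ : ℂ) *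
        Complex.exp (-(‖ξ‖ : ℂ) * (t : ℂ)))) u
  have e2 : ∀ η : V, (bmp (u⁻¹ * ‖u • η‖) : ℂ) * (Complex.exp (Complex.I * (⟪x, u • η⟫ : ℂ)) * m (u • η) * (‖u • η‖ : ℂ) *
        Complex.exp (-(‖u • η‖ : ℂ) * (t : ℂ))) = (u : ℂ) * (Complex.exp (Complex.I * (⟪u • x, η⟫ : ℂ)) *
        ((bmp ‖η‖ * ‖η‖) • (rexp (-(t * u) * ‖η‖) • m (u • η)))) := by
    intro η
    rw [norm_smul, Real.norm_eq_abs, abs_of_pos hu, inv_mul_cancel_left₀ hu.ne', inner_smul_left,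
      inner_smul_right]
    simp only [Complex.real_smul]
    push_cast
    have : -((u:ℂ) * ‖η‖) * t = -(t * u) * ‖η‖ := by ring
    rw [this]
    simp
    ring
  simp_rw [e2] at key
  rw [integral_const_mul] at key
  have hud : 0 < u ^ (Module.finrank ℝ V) := by positivity
  rw [abs_of_pos (by positivity)] at key
  have key2 := congrArg norm key
  rw [norm_mul, norm_smul, Complex.norm_real, Real.norm_eq_abs, Real.norm_eq_abs, abs_of_pos hu,
    abs_of_pos (inv_pos.2 hud)] at key2
  rw [eq_comm, inv_mul_eq_iff_eq_mul₀ hud.ne'] at key2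
  rw [key2]
  calc _ ≤ u ^ (Module.finrank ℝ V) * (u * (B * c * rexp (-(t * u) / 2) * ((1 + u * ‖x‖) ^ M)⁻¹)) := by gcongr
    _ = _ := by ring

end FourierPart

section KernelPart
variable {V : Type*} [NormedAddCommGroup V] [InnerProductSpace ℝ V] [FiniteDimensional ℝ V]
  [MeasurableSpace V] [BorelSpace V]

lemma phi_meas : Measurable (fun w : ℝ => bmp (w⁻¹) * w⁻¹) :=
  (bmp.continuous.measurable.comp measurable_inv).mul measurable_inv

lemma phi_nonneg (w : ℝ) (hw : 0 < w) : 0 ≤ bmp (w⁻¹) * w⁻¹ :=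
  mul_nonneg bmp.nonneg (inv_pos.2 hw).le

lemma phi_int : IntegrableOn (fun w : ℝ => bmp (w⁻¹) * w⁻¹) (Set.Ioi 0) := by
  have h : IntegrableOn ((Set.Icc (0:ℝ) 1).indicator (fun _ => (3:ℝ))) (Set.Ioi 0) := by
    apply Integrable.integrableOn
    rw [integrable_indicator_iff measurableSet_Icc]
    exact integrableOn_const (by simp) enorm_ne_top
  refine Integrable.mono' h phi_meas.aestronglyMeasurable ?_
  filter_upwards [ae_restrict_mem measurableSet_Ioi] with w hw
  have hw : 0 < w := hw
  rw [Real.norm_of_nonneg (phi_nonneg w hw)]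
  by_cases h1 : 3 ≤ w⁻¹ ∨ w⁻¹ ≤ 1
  · rw [bmp_zero_of h1.symm, zero_mul]
    exact Set.indicator_nonneg (fun _ _ => by norm_num) _
  · push Not at h1
    rw [Set.indicator_of_mem]
    · calc _ ≤ 1 * w⁻¹ := by
            have := bmp.le_one (x := w⁻¹)
            have := (inv_pos.2 hw).le
            gcongr
        _ ≤ 3 := by linarith
    · refine ⟨hw.le, ?_⟩
      have := h1.2
      rw [one_lt_inv₀ hw] at this
      exact this.le

lemma phi_pos : 0 < ∫ w in Set.Ioi (0:ℝ), bmp (w⁻¹) * w⁻¹ := by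
  rw [setIntegral_pos_iff_support_of_nonneg_ae _ phi_int]
  · have hsub : Set.Ioo (1/3 : ℝ) 1 ⊆
        (Function.support fun w : ℝ => bmp (w⁻¹) * w⁻¹) ∩ Set.Ioi 0 := by
      rintro w ⟨h1, h2⟩
      have h0 : 0 < w := by linarith
      refine ⟨?_, h0⟩
      refine mul_ne_zero ?_ (inv_pos.2 h0).ne'
      refine (bmp.pos_of_mem_ball ?_).ne'
      change dist w⁻¹ 2 < 1
      rw [Real.dist_eq, abs_lt]
      have e1 : 1 < w⁻¹ := (one_lt_inv₀ h0).2 h2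
      have e2 : w⁻¹ < 3 := by
        rw [inv_lt_comm₀ h0 (by norm_num)]; linarith
      constructor <;> linarith
    refine lt_of_lt_of_le ?_ (measure_mono hsub)
    rw [Real.volume_Ioo]
    norm_num
  · filter_upwards [ae_restrict_mem measurableSet_Ioi] with w hw
    exact phi_nonneg w hw

lemma phi_eq {s : ℝ} (hs : 0 < s) (u : ℝ) :
    bmp (u⁻¹ * s) * u⁻¹ = s⁻¹ * ((fun w : ℝ => bmp (w⁻¹) * w⁻¹) (s⁻¹ * u)) := by
  simp only [mul_inv, inv_inv]
  rw [mul_comm s u⁻¹]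
  field_simp

lemma phi_scale {s : ℝ} (hs : 0 < s) :
    ∫ u in Set.Ioi (0:ℝ), bmp (u⁻¹ * s) * u⁻¹ = ∫ w in Set.Ioi (0:ℝ), bmp (w⁻¹) * w⁻¹ := by
  have := integral_comp_mul_left_Ioi (fun w : ℝ => bmp (w⁻¹) * w⁻¹) 0 (inv_pos.2 hs)
  simp_rw [phi_eq hs]
  rw [integral_const_mul, this]
  simp [hs.ne']

lemma phi_scale_int {s : ℝ} (hs : 0 < s) :
    IntegrableOn (fun u : ℝ => bmp (u⁻¹ * s) * u⁻¹) (Set.Ioi 0) := by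
  simp_rw [phi_eq hs]
  apply Integrable.const_mul
  have := (integrableOn_Ioi_comp_mul_left_iff (fun w : ℝ => bmp (w⁻¹) * w⁻¹) 0 (inv_pos.2 hs)).2
    (by simpa using phi_int)
  exact this

noncomputable def PK (V : Type*) [NormedAddCommGroup V] [InnerProductSpace ℝ V] (x : V) (t : ℝ) : ENNReal :=
  ∫⁻ u in Set.Ioi (0:ℝ), ENNReal.ofReal (u ^ (Module.finrank ℝ V) * rexp (-(t * u)/2) *
    ((1 + u * ‖x‖) ^ (Module.finrank ℝ V + 1))⁻¹)

lemma decomp (g : V → ℂ) (hg : Integrable g) (h0 : g 0 = 0) :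
    ‖∫ ξ, g ξ‖ₑ ≤ ENNReal.ofReal ((∫ w in Set.Ioi (0:ℝ), bmp (w⁻¹) * w⁻¹)⁻¹) *
      ∫⁻ u in Set.Ioi (0:ℝ), ‖(u⁻¹ : ℝ)‖ₑ * ‖∫ ξ, (bmp (u⁻¹ * ‖ξ‖) : ℂ) * g ξ‖ₑ := by
  set L := ∫ w in Set.Ioi (0:ℝ), bmp (w⁻¹) * w⁻¹ with hL
  have hLpos : 0 < L := phi_pos
  have hin : ∀ ξ, ∫ u in Set.Ioi (0:ℝ), (((bmp (u⁻¹ * ‖ξ‖) * u⁻¹ : ℝ)) : ℂ) * g ξ = (L : ℂ) * g ξ := by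
    intro ξ
    by_cases hξ : ξ = 0
    · simp [hξ, h0]
    · rw [integral_mul_const, integral_complex_ofReal, phi_scale (norm_pos_iff.2 hξ)]
  have hsw : Integrable (Function.uncurry fun (ξ : V) (u : ℝ) => (((bmp (u⁻¹ * ‖ξ‖) * u⁻¹ : ℝ)) : ℂ) * g ξ)
      (volume.prod (volume.restrict (Set.Ioi (0:ℝ)))) := by
    rw [integrable_prod_iff]
    · constructor
      · filter_upwards with ξ
        by_cases hξ : ξ = 0
        · simp [Function.uncurry, hξ, h0]
        · exact (Integrable.ofReal (𝕜 := ℂ) (phi_scale_int (norm_pos_iff.2 hξ))).mul_const (g ξ)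
      · have : (fun ξ : V => ∫ u in Set.Ioi (0:ℝ), ‖Function.uncurry (fun (ξ : V) (u : ℝ) => (((bmp (u⁻¹ * ‖ξ‖) * u⁻¹ : ℝ)) : ℂ) * g ξ) (ξ, u)‖) = fun ξ => L * ‖g ξ‖ := by
          ext ξ
          by_cases hξ : ξ = 0
          · simp [Function.uncurry, hξ, h0]
          · simp only [Function.uncurry, norm_mul, Complex.norm_real]
            rw [integral_mul_const, hL, ← phi_scale (norm_pos_iff.2 hξ)]
            congr 1
            apply setIntegral_congr_fun measurableSet_Ioi
            intro u hu
            have hu : 0 < u := hu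
            have : 0 ≤ bmp (u⁻¹ * ‖ξ‖) * u⁻¹ := mul_nonneg bmp.nonneg (inv_pos.2 hu).le
            simp only [← norm_mul]
            rw [Real.norm_of_nonneg this]
        rw [this]
        exact hg.norm.const_mul _
    · refine AEStronglyMeasurable.mul ?_ hg.aestronglyMeasurable.comp_fst
      apply Measurable.aestronglyMeasurable
      apply Complex.measurable_ofReal.comp
      exact (bmp.continuous.measurable.comp (measurable_snd.inv.mul measurable_fst.norm)).mul
        measurable_snd.inv
  have e1 : ∫ ξ, g ξ = (L⁻¹ : ℝ) • ∫ u in Set.Ioi (0:ℝ), (u⁻¹ : ℝ) • ∫ ξ, (bmp (u⁻¹ * ‖ξ‖) : ℂ) * g ξ := by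
    have := integral_integral_swap hsw
    simp_rw [hin] at this
    rw [integral_const_mul] at this
    rw [eq_comm, inv_smul_eq_iff₀ hLpos.ne', Complex.real_smul, this]
    congr 1
    ext u
    rw [Complex.real_smul, ← integral_const_mul]
    congr 1
    ext ξ
    push_cast
    ring
  rw [e1, enorm_smul]
  gcongr
  · rw [Real.enorm_of_nonneg (inv_pos.2 hLpos).le]
  · refine (enorm_integral_le_lintegral_enorm _).trans ?_
    simp_rw [enorm_smul]
    rfl

lemma integrable_symbol {m : V → ℂ} {c : ℝ} (hm : ContDiffOn ℝ ∞ m {0}ᶜ)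
    (hb : ∀ ξ : V, ξ ≠ 0 → ‖m ξ‖ ≤ c) {t : ℝ} (ht : 0 < t) :
    Integrable (fun ξ : V => m ξ * (‖ξ‖ : ℂ) * Complex.exp (-(‖ξ‖ : ℂ) * (t : ℂ))) := by
  set d := Module.finrank ℝ V
  have hI := integrable_one_add_norm (E := V) (μ := volume) (r := d + 1) (by simp [d])
  refine (hI.const_mul (|c| * ((d+2).factorial * (t ^ (d+2))⁻¹ * rexp t))).mono' ?_ ?_
  · have e : (fun ξ : V => m ξ * (‖ξ‖ : ℂ) * Complex.exp (-(‖ξ‖ : ℂ) * (t : ℂ))) =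
        ({0}ᶜ : Set V).indicator (fun ξ : V => m ξ * (‖ξ‖ : ℂ) * Complex.exp (-(‖ξ‖ : ℂ) * (t : ℂ))) := by
      ext ξ
      by_cases h : ξ = 0
      · simp [h]
      · rw [Set.indicator_of_mem (by simpa using h)]
    rw [e, aestronglyMeasurable_indicator_iff (measurableSet_singleton _).compl]
    apply ContinuousOn.aestronglyMeasurable _ (measurableSet_singleton _).compl
    refine (hm.continuousOn.mul ?_).mul ?_
    · exact (Complex.continuous_ofReal.comp continuous_norm).continuousOn
    · apply Continuous.continuousOn; fun_prop
  · filter_upwards with ξ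
    have hm' : ‖m ξ * (‖ξ‖ : ℂ) * Complex.exp (-(‖ξ‖ : ℂ) * (t : ℂ))‖ ≤ |c| * (‖ξ‖ * rexp (-(t * ‖ξ‖))) := by
      have : -(‖ξ‖ : ℂ) * (t : ℂ) = ((-(t * ‖ξ‖) : ℝ) : ℂ) := by push_cast; ring
      rw [this, ← Complex.ofReal_exp, norm_mul, norm_mul, Complex.norm_real, Complex.norm_real,
        norm_norm, Real.norm_of_nonneg (Real.exp_pos _).le, mul_assoc]
      by_cases h : ξ = 0
      · simp [h]
      · gcongr
        exact (hb ξ h).trans (le_abs_self _)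
    refine hm'.trans ?_
    rw [mul_assoc]
    refine mul_le_mul_of_nonneg_left ?_ (abs_nonneg c)
    have h1 := Real.pow_div_factorial_le_exp (t * (1 + ‖ξ‖)) (by positivity) (d+2)
    rw [div_le_iff₀ (by positivity), mul_pow] at h1
    have h2 : rexp (t * (1 + ‖ξ‖)) * rexp (-(t * ‖ξ‖)) = rexp t := by
      rw [← Real.exp_add]; congr 1; ring
    have h3 : (1 + ‖ξ‖) ^ (-((d:ℝ)+1)) = ((1 + ‖ξ‖) ^ (d+1))⁻¹ := by
      rw [Real.rpow_neg (by positivity)]; congr 1; exact_mod_cast Real.rpow_natCast _ (d+1)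
    rw [h3, ← div_eq_mul_inv, le_div_iff₀ (by positivity)]
    calc ‖ξ‖ * rexp (-(t * ‖ξ‖)) * (1 + ‖ξ‖) ^ (d+1)
        ≤ (1 + ‖ξ‖) * rexp (-(t * ‖ξ‖)) * (1 + ‖ξ‖) ^ (d+1) := by gcongr; linarith
      _ = (t ^ (d+2))⁻¹ * (t ^ (d+2) * (1 + ‖ξ‖) ^ (d+2)) * rexp (-(t * ‖ξ‖)) := by
          rw [inv_mul_cancel_left₀ (by positivity)]; ring
      _ ≤ (t ^ (d+2))⁻¹ * (rexp (t * (1 + ‖ξ‖)) * (d+2).factorial) * rexp (-(t * ‖ξ‖)) := by gcongr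
      _ = (d+2).factorial * (t ^ (d+2))⁻¹ * (rexp (t * (1 + ‖ξ‖)) * rexp (-(t * ‖ξ‖))) := by ring
      _ = _ := by rw [h2]

lemma kernel_bound (c : ℝ) (hc : 0 ≤ c) :
    ∃ B : ENNReal, B ≠ ⊤ ∧ ∀ m : V → ℂ, ContDiffOn ℝ ∞ m {0}ᶜ →
      (∀ ξ : V, ξ ≠ 0 → ∀ n : ℕ, n ≤ Module.finrank ℝ V + 1 →
        ‖iteratedFDeriv ℝ n m ξ‖ ≤ c * ‖ξ‖ ^ (-(n : ℝ))) →
      ∀ t : ℝ, 0 < t → ∀ x : V,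
      ‖∫ ξ : V, (Complex.exp (Complex.I * (⟪x, ξ⟫ : ℂ)) * m ξ * (‖ξ‖ : ℂ) *
        Complex.exp (-(‖ξ‖ : ℂ) * (t : ℂ)))‖ₑ ≤ B * PK V x t := by
  obtain ⟨B, hB0, hB⟩ := piece_bound (V := V) (Module.finrank ℝ V + 1) c hc
  refine ⟨ENNReal.ofReal ((∫ w in Set.Ioi (0:ℝ), bmp (w⁻¹) * w⁻¹)⁻¹) * ENNReal.ofReal B,
    ENNReal.mul_ne_top ENNReal.ofReal_ne_top ENNReal.ofReal_ne_top, ?_⟩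
  intro m hm hb t ht x
  have hint : Integrable (fun ξ : V => Complex.exp (Complex.I * (⟪x, ξ⟫ : ℂ)) * m ξ * (‖ξ‖ : ℂ) *
        Complex.exp (-(‖ξ‖ : ℂ) * (t : ℂ))) := by
    have h1 := integrable_symbol (c := c) hm (fun ξ hξ => by simpa using hb ξ hξ 0 (by omega)) ht
    have h2 := h1.bdd_mul (c := 1) (f := fun ξ : V => Complex.exp (Complex.I * (⟪x, ξ⟫ : ℂ)))
      (by apply Continuous.aestronglyMeasurable; fun_prop)
      (by
        filter_upwards with ξ
        rw [mul_comm]; exact (Complex.norm_exp_ofReal_mul_I _).le)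
    refine h2.congr ?_
    filter_upwards with ξ
    ring
  refine (decomp _ hint (by simp)).trans ?_
  rw [mul_assoc]
  gcongr
  rw [PK, ← lintegral_const_mul' _ _ ENNReal.ofReal_ne_top]
  apply setLIntegral_mono' measurableSet_Ioi
  intro u hu
  have hu : 0 < u := hu
  have := hB m hm hb t ht.le u hu x
  rw [← ENNReal.ofReal_mul hB0, ← enorm_norm (∫ ξ : V, _), ← enorm_mul,
    Real.enorm_of_nonneg (by positivity)]
  apply ENNReal.ofReal_le_ofReal
  calc _ ≤ u⁻¹ * (B * (u ^ (Module.finrank ℝ V + 1) * rexp (-(t * u)/2) * ((1 + u * ‖x‖) ^ (Module.finrank ℝ V + 1))⁻¹)) := by gcongr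
    _ = _ := by rw [pow_succ u]; field_simp

end KernelPart

section SchurPart

lemma schur {X Y : Type*} [MeasurableSpace X] [MeasurableSpace Y] (μ : Measure X) (ν : Measure Y)
    [SFinite μ] [SFinite ν] (k : X → Y → ENNReal) (hk : Measurable (Function.uncurry k))
    (φ : Y → ENNReal) (hφ : Measurable φ) (ψ : X → ENNReal) (hψ : Measurable ψ)
    (hφ0 : ∀ᵐ y ∂ν, φ y ≠ 0 ∧ φ y ≠ ⊤) (A : ENNReal) {p q : ℝ} (hpq : p.HolderConjugate q)
    (H1 : ∀ᵐ x ∂μ, ∫⁻ y, k x y * φ y ^ p ∂ν ≤ A * ψ x ^ p)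
    (H2 : ∀ᵐ y ∂ν, ∫⁻ x, k x y * ψ x ^ q ∂μ ≤ A * φ y ^ q)
    (h : Y → ENNReal) (hh : Measurable h) :
    ∫⁻ x, (∫⁻ y, k x y * h y ∂ν) ^ q ∂μ ≤ A ^ q * ∫⁻ y, h y ^ q ∂ν := by
  have hp0 := hpq.pos
  have hq0 := hpq.symm.pos
  have hkx : ∀ x, Measurable (k x) := fun x => hk.comp measurable_prodMk_left
  have hG : Measurable (fun z : X × Y => k z.1 z.2 * ((φ z.2)⁻¹ ^ q * h z.2 ^ q)) :=
    hk.mul (((hφ.comp measurable_snd).inv.pow_const q).mul ((hh.comp measurable_snd).pow_const q))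
  have step1 : ∀ᵐ x ∂μ, (∫⁻ y, k x y * h y ∂ν) ^ q ≤
      A ^ (q / p) * (ψ x ^ q * ∫⁻ y, k x y * ((φ y)⁻¹ ^ q * h y ^ q) ∂ν) := by
    filter_upwards [H1] with x hx
    have hold := ENNReal.lintegral_mul_le_Lp_mul_Lq ν hpq
      (f := fun y => k x y ^ (1/p) * φ y) (g := fun y => k x y ^ (1/q) * ((φ y)⁻¹ * h y))
      (((hkx x).pow_const _).mul hφ).aemeasurable
      (((hkx x).pow_const _).mul (hφ.inv.mul hh)).aemeasurable
    have e1 : ∫⁻ y, k x y * h y ∂ν = ∫⁻ y, ((fun y => k x y ^ (1/p) * φ y) *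
        (fun y => k x y ^ (1/q) * ((φ y)⁻¹ * h y))) y ∂ν := by
      apply lintegral_congr_ae
      filter_upwards [hφ0] with y hy
      simp only [Pi.mul_apply]
      have : k x y = k x y ^ (1/p) * k x y ^ (1/q) := by
        rw [← ENNReal.rpow_add_of_nonneg _ _ (by positivity) (by positivity)]
        have : 1/p + 1/q = 1 := by simpa using hpq.inv_add_inv_eq_one
        rw [this, ENNReal.rpow_one]
      calc k x y * h y = (k x y ^ (1/p) * k x y ^ (1/q)) * h y := by rw [← this]
        _ = (k x y ^ (1/p) * k x y ^ (1/q)) * ((φ y * (φ y)⁻¹) * h y) := by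
            rw [ENNReal.mul_inv_cancel hy.1 hy.2, one_mul]
        _ = _ := by ring
    rw [← e1] at hold
    have e2 : ∀ y, (k x y ^ (1/p) * φ y) ^ p = k x y * φ y ^ p := fun y => by
      rw [ENNReal.mul_rpow_of_nonneg _ _ hp0.le, ← ENNReal.rpow_mul, one_div_mul_cancel hp0.ne',
        ENNReal.rpow_one]
    have e3 : ∀ y, (k x y ^ (1/q) * ((φ y)⁻¹ * h y)) ^ q = k x y * ((φ y)⁻¹ ^ q * h y ^ q) := fun y => by
      rw [ENNReal.mul_rpow_of_nonneg _ _ hq0.le, ← ENNReal.rpow_mul, one_div_mul_cancel hq0.ne',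
        ENNReal.rpow_one, ENNReal.mul_rpow_of_nonneg _ _ hq0.le]
    simp only [e2, e3] at hold
    calc (∫⁻ y, k x y * h y ∂ν) ^ q ≤ ((A * ψ x ^ p) ^ (1/p) *
          (∫⁻ y, k x y * ((φ y)⁻¹ ^ q * h y ^ q) ∂ν) ^ (1/q)) ^ q := by
          refine ENNReal.rpow_le_rpow (hold.trans ?_) hq0.le
          gcongr
      _ = _ := by
          rw [ENNReal.mul_rpow_of_nonneg _ _ hq0.le, ← ENNReal.rpow_mul, ← ENNReal.rpow_mul,
            one_div_mul_cancel hq0.ne', ENNReal.rpow_one, ENNReal.mul_rpow_of_nonneg _ _ (by positivity),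
            ← ENNReal.rpow_mul, mul_assoc]
          have t1 : 1 / p * q = q / p := by ring
          have t2 : p * (q / p) = q := by field_simp
          rw [t1, t2]
  calc _ ≤ ∫⁻ x, A ^ (q / p) * (ψ x ^ q * ∫⁻ y, k x y * ((φ y)⁻¹ ^ q * h y ^ q) ∂ν) ∂μ :=
        lintegral_mono_ae step1
    _ = A ^ (q / p) * ∫⁻ x, (∫⁻ y, ψ x ^ q * (k x y * ((φ y)⁻¹ ^ q * h y ^ q)) ∂ν) ∂μ := by
        rw [lintegral_const_mul]
        · congr 1
          apply lintegral_congr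
          intro x
          rw [lintegral_const_mul]
          exact hG.comp measurable_prodMk_left
        · exact (hψ.pow_const q).mul hG.lintegral_prod_right'
    _ = A ^ (q / p) * ∫⁻ y, (∫⁻ x, ψ x ^ q * (k x y * ((φ y)⁻¹ ^ q * h y ^ q)) ∂μ) ∂ν := by
        rw [lintegral_lintegral_swap]
        exact (((hψ.comp measurable_fst).pow_const q).mul hG).aemeasurable
    _ ≤ A ^ (q / p) * ∫⁻ y, A * h y ^ q ∂ν := by
        refine mul_le_mul_right ?_ _
        apply lintegral_mono_ae
        filter_upwards [H2, hφ0] with y hy hy0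
        calc ∫⁻ x, ψ x ^ q * (k x y * ((φ y)⁻¹ ^ q * h y ^ q)) ∂μ
            = (∫⁻ x, k x y * ψ x ^ q ∂μ) * ((φ y)⁻¹ ^ q * h y ^ q) := by
              rw [← lintegral_mul_const]
              · apply lintegral_congr; intro x; ring
              · exact (hk.comp measurable_prodMk_right).mul (hψ.pow_const q)
          _ ≤ A * φ y ^ q * ((φ y)⁻¹ ^ q * h y ^ q) := by gcongr
          _ = A * ((φ y * (φ y)⁻¹) ^ q * h y ^ q) := by
              rw [ENNReal.mul_rpow_of_nonneg _ _ hq0.le]; ring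
          _ = A * h y ^ q := by
              rw [ENNReal.mul_inv_cancel hy0.1 hy0.2, ENNReal.one_rpow, one_mul]
    _ = A ^ (q / p) * A ^ (1:ℝ) * ∫⁻ y, h y ^ q ∂ν := by
        rw [lintegral_const_mul _ (hh.pow_const q), ENNReal.rpow_one, mul_assoc]
    _ = _ := by
        rw [← ENNReal.rpow_add_of_nonneg _ _ (by positivity) (by positivity)]
        congr 2
        have := hpq.inv_add_inv_eq_one
        field_simp at this ⊢
        linarith

lemma lgamma {a r : ℝ} (ha : 0 < a) (hr : 0 < r) :
    ∫⁻ t in Set.Ioi (0:ℝ), ENNReal.ofReal (t ^ (a - 1) * rexp (-(r * t))) =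
      ENNReal.ofReal ((1 / r) ^ a * Real.Gamma a) := by
  have h := Real.integral_rpow_mul_exp_neg_mul_Ioi ha hr
  have hpos : 0 < (1 / r) ^ a * Real.Gamma a :=
    mul_pos (Real.rpow_pos_of_pos (by positivity) _) (Real.Gamma_pos_of_pos ha)
  rw [← h, ofReal_integral_eq_lintegral_ofReal]
  · apply Integrable.of_integral_ne_zero
    rw [h]; exact hpos.ne'
  · filter_upwards [ae_restrict_mem measurableSet_Ioi] with t ht
    have ht : 0 < t := ht
    simp only [Pi.zero_apply]
    positivity

variable {V : Type*} [NormedAddCommGroup V] [InnerProductSpace ℝ V] [FiniteDimensional ℝ V]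
  [MeasurableSpace V] [BorelSpace V]

omit [FiniteDimensional ℝ V] in
lemma PK_measurable : Measurable (fun p : V × ℝ => PK V p.1 p.2) := by
  unfold PK
  have : Measurable (fun z : (V × ℝ) × ℝ => ENNReal.ofReal (z.2 ^ (Module.finrank ℝ V) * rexp (-(z.1.2 * z.2)/2) *
    ((1 + z.2 * ‖z.1.1‖) ^ (Module.finrank ℝ V + 1))⁻¹)) := by
    fun_prop
  exact this.lintegral_prod_right'

lemma lscale (f : V → ENNReal) (hf : Measurable f) {u : ℝ} (hu : 0 < u) :
    ENNReal.ofReal (u ^ (Module.finrank ℝ V)) * ∫⁻ z, f (u • z) = ∫⁻ z, f z := by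
  have := Measure.map_addHaar_smul (volume : Measure V) hu.ne'
  rw [← lintegral_map hf (measurable_const_smul u), this, lintegral_smul_measure, smul_eq_mul,
    ← mul_assoc, ← ENNReal.ofReal_mul (by positivity), abs_of_pos (by positivity),
    mul_inv_cancel₀ (by positivity), ENNReal.ofReal_one, one_mul]

noncomputable def B0 (V : Type*) [NormedAddCommGroup V] [InnerProductSpace ℝ V] [MeasureSpace V] :
    ENNReal := ∫⁻ z : V, ENNReal.ofReal (((1 + ‖z‖) ^ (Module.finrank ℝ V + 1))⁻¹)

lemma B0_ne_top : B0 V ≠ ⊤ := by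
  have := finite_integral_one_add_norm (E := V) (μ := volume) (r := Module.finrank ℝ V + 1) (by simp)
  have e : ∀ z : V, (1 + ‖z‖) ^ (-((Module.finrank ℝ V : ℝ)+1)) = ((1 + ‖z‖) ^ (Module.finrank ℝ V+1))⁻¹ := fun z => by
    rw [Real.rpow_neg (by positivity)]; congr 1; exact_mod_cast Real.rpow_natCast _ (Module.finrank ℝ V+1)
  simp_rw [e] at this
  exact this.ne

lemma PK_lintegral (x : V) (t : ℝ) :
    ∫⁻ z, PK V (x - z) t = B0 V * ∫⁻ u in Set.Ioi (0:ℝ), ENNReal.ofReal (rexp (-(t*u)/2)) := by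
  unfold PK
  rw [lintegral_lintegral_swap]
  · rw [← lintegral_const_mul _ (by fun_prop)]
    apply setLIntegral_congr_fun measurableSet_Ioi
    intro u hu
    have hu : 0 < u := hu
    have e : ∀ z : V, ENNReal.ofReal (u ^ (Module.finrank ℝ V) * rexp (-(t * u)/2) *
      ((1 + u * ‖x - z‖) ^ (Module.finrank ℝ V + 1))⁻¹) = ENNReal.ofReal (rexp (-(t * u)/2)) *
       (ENNReal.ofReal (u ^ (Module.finrank ℝ V)) *
        ENNReal.ofReal (((1 + ‖u • (x - z)‖) ^ (Module.finrank ℝ V + 1))⁻¹)) := by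
      intro z
      rw [← ENNReal.ofReal_mul (by positivity), ← ENNReal.ofReal_mul (by positivity), norm_smul,
        Real.norm_of_nonneg hu.le]
      congr 1; ring
    simp only [e]
    rw [lintegral_const_mul _ (by fun_prop), lintegral_const_mul _ (by fun_prop),
      lintegral_sub_left_eq_self (fun z : V => ENNReal.ofReal (((1 + ‖u • z‖) ^ (Module.finrank ℝ V + 1))⁻¹)) x,
      lscale (fun z : V => ENNReal.ofReal (((1 + ‖z‖) ^ (Module.finrank ℝ V + 1))⁻¹)) (by fun_prop) hu,
      mul_comm]
    rfl
  · apply Measurable.aemeasurable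
    simp only [Function.uncurry_def]
    fun_prop


end SchurPart

section SchurPart2
variable {V : Type*} [NormedAddCommGroup V] [InnerProductSpace ℝ V] [FiniteDimensional ℝ V]
  [MeasurableSpace V] [BorelSpace V]

/-- Product measure on the half space. -/
noncomputable def hM (V : Type*) [NormedAddCommGroup V] [InnerProductSpace ℝ V] [FiniteDimensional ℝ V]
    [MeasurableSpace V] [BorelSpace V] : Measure (V × ℝ) :=
  (volume : Measure V).prod ((volume : Measure ℝ).restrict (Set.Ioi (0:ℝ)))

instance : SFinite (hM V) := by unfold hM; infer_instance

omit [FiniteDimensional ℝ V] [MeasurableSpace V] [BorelSpace V] in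
lemma PK_symm (x y : V) (t : ℝ) : PK V (x - y) t = PK V (y - x) t := by
  unfold PK
  rw [norm_sub_rev]

attribute [local irreducible] PK

set_option maxHeartbeats 1000000 in
lemma weight_bound {a : ℝ} (ha0 : 0 < a) (ha1 : a < 1) :
    ∃ A : ENNReal, A ≠ ⊤ ∧ ∀ (x : V) (s : ℝ), 0 < s →
      ∫⁻ w : V × ℝ, PK V (x - w.1) (s + w.2) * ENNReal.ofReal (w.2 ^ (-a))
        ∂(hM V) ≤ A * ENNReal.ofReal (s ^ (-a)) := by
  refine ⟨B0 V * ENNReal.ofReal (2 ^ (1 - a) * Real.Gamma (1 - a) * (2 ^ a * Real.Gamma a)),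
    ENNReal.mul_ne_top B0_ne_top ENNReal.ofReal_ne_top, ?_⟩
  intro x s hs
  have hmeas : Measurable (fun w : V × ℝ => PK V (x - w.1) (s + w.2)) :=
    (PK_measurable (V := V)).comp (f := fun w : V × ℝ => (x - w.1, s + w.2)) (by fun_prop)
  unfold hM
  rw [lintegral_prod_symm]
  swap
  · exact (hmeas.mul (by fun_prop)).aemeasurable
  have e1 : ∀ y : ℝ, ∫⁻ z : V, PK V (x - z) (s + y) * ENNReal.ofReal (y ^ (-a)) =
      B0 V * ∫⁻ u in Set.Ioi (0:ℝ), ENNReal.ofReal (rexp (-((s+y)*u)/2)) * ENNReal.ofReal (y ^ (-a)) := by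
    intro y
    have hm2 : Measurable (fun z : V => PK V (x - z) (s + y)) := 
      (PK_measurable (V := V)).comp (f := fun z : V => (x - z, s + y)) (by fun_prop)
    rw [lintegral_mul_const _ hm2, PK_lintegral,
      lintegral_mul_const _ (by fun_prop), mul_assoc]
  simp only [e1]
  rw [lintegral_const_mul, mul_assoc]
  swap
  · have : Measurable (fun z : ℝ × ℝ => ENNReal.ofReal (rexp (-((s+z.1)*z.2)/2)) * ENNReal.ofReal (z.1 ^ (-a))) := by
      fun_prop
    exact this.lintegral_prod_right'
  gcongr
  rw [lintegral_lintegral_swap (by apply Measurable.aemeasurable; simp only [Function.uncurry_def]; fun_prop)]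
  have e2 : ∀ u ∈ Set.Ioi (0:ℝ), ∫⁻ y in Set.Ioi (0:ℝ), ENNReal.ofReal (rexp (-((s+y)*u)/2)) * ENNReal.ofReal (y ^ (-a)) =
      ENNReal.ofReal (2 ^ (1 - a) * Real.Gamma (1 - a)) * ENNReal.ofReal (u ^ (a - 1) * rexp (-(s/2 * u))) := by
    intro u hu
    have hu : 0 < u := hu
    have h := lgamma (a := 1 - a) (r := u / 2) (by linarith) (by linarith)
    have e3 : ∀ y : ℝ, ENNReal.ofReal (rexp (-((s+y)*u)/2)) * ENNReal.ofReal (y ^ (-a)) =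
        ENNReal.ofReal (rexp (-(s/2 * u))) * ENNReal.ofReal (y ^ (1 - a - 1) * rexp (-(u/2 * y))) := by
      intro y
      have : rexp (-((s+y)*u)/2) = rexp (-(s/2 * u)) * rexp (-(u/2 * y)) := by
        rw [← Real.exp_add]; congr 1; ring
      rw [this, ENNReal.ofReal_mul (by positivity), ENNReal.ofReal_mul' (by positivity)]
      have : 1 - a - 1 = -a := by ring
      rw [this]; ring
    simp only [e3]
    rw [lintegral_const_mul _ (by fun_prop), h, ← ENNReal.ofReal_mul (by positivity),
      ← ENNReal.ofReal_mul (mul_nonneg (by positivity) (Real.Gamma_pos_of_pos (by linarith)).le)]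
    congr 1
    have : (1 / (u / 2)) ^ (1 - a) = 2 ^ (1 - a) * u ^ (a - 1) := by
      rw [one_div_div, Real.div_rpow (by norm_num) hu.le, div_eq_mul_inv, ← Real.rpow_neg hu.le]
      congr 2; ring
    rw [this]; ring
  rw [setLIntegral_congr_fun measurableSet_Ioi e2, lintegral_const_mul _ (by fun_prop),
    lgamma ha0 (by linarith), ← ENNReal.ofReal_mul (mul_nonneg (by positivity) (Real.Gamma_pos_of_pos (by linarith)).le),
    ← ENNReal.ofReal_mul (mul_nonneg (mul_nonneg (by positivity) (Real.Gamma_pos_of_pos (by linarith)).le)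
      (mul_nonneg (by positivity) (Real.Gamma_pos_of_pos ha0).le))]
  apply le_of_eq
  congr 1
  have : (1 / (s / 2)) ^ a = 2 ^ a * s ^ (-a) := by
    rw [one_div_div, Real.div_rpow (by norm_num) hs.le, div_eq_mul_inv, ← Real.rpow_neg hs.le]
  rw [this]; ring

set_option maxHeartbeats 1000000 in
lemma PK_Lq {q : ℝ} (hq : 1 < q) :
    ∃ A : ENNReal, A ≠ ⊤ ∧ ∀ h : V × ℝ → ENNReal, Measurable h →
      ∫⁻ p : V × ℝ, (∫⁻ w : V × ℝ, PK V (p.1 - w.1) (p.2 + w.2) * h w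
        ∂(hM V)) ^ q ∂(hM V)
      ≤ A ^ q * ∫⁻ w, h w ^ q ∂(hM V) := by
  have hpq : (Real.conjExponent q).HolderConjugate q := (Real.HolderConjugate.conjExponent hq).symm
  set p := Real.conjExponent q
  have hp0 := hpq.pos
  have hp1 := hpq.lt
  have hq0 := hpq.symm.pos
  obtain ⟨A1, hA1, h1⟩ := weight_bound (V := V) (a := 1/q) (by positivity) (by rw [div_lt_one hq0]; exact hq)
  obtain ⟨A2, hA2, h2⟩ := weight_bound (V := V) (a := 1/p) (by positivity) (by rw [div_lt_one hp0]; exact hp1)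
  have hpos : ∀ᵐ w : V × ℝ ∂(hM V), 0 < w.2 :=
    Measure.quasiMeasurePreserving_snd (μ := (volume : Measure V)) (ν := (volume : Measure ℝ).restrict (Set.Ioi (0:ℝ))) |>.ae (ae_restrict_mem measurableSet_Ioi)
  refine ⟨A1 + A2, by simp [hA1, hA2], fun h hh => ?_⟩
  refine schur (hM V) (hM V) (fun p w : V × ℝ => PK V (p.1 - w.1) (p.2 + w.2)) ?_
    (fun w : V × ℝ => ENNReal.ofReal (w.2 ^ (-(1/(p*q))))) (by fun_prop)
    (fun w : V × ℝ => ENNReal.ofReal (w.2 ^ (-(1/(p*q))))) (by fun_prop) ?_ (A1 + A2) hpq ?_ ?_ h hh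
  · exact (PK_measurable (V := V)).comp (f := fun z : (V × ℝ) × (V × ℝ) => (z.1.1 - z.2.1, z.1.2 + z.2.2)) (by fun_prop)
  · filter_upwards [hpos] with w hw
    refine ⟨?_, ENNReal.ofReal_ne_top⟩
    have := Real.rpow_pos_of_pos hw (-(1/(p*q)))
    simpa using this
  · have e : ∀ y : ℝ, 0 < y → ENNReal.ofReal (y ^ (-(1/(p*q)))) ^ p = ENNReal.ofReal (y ^ (-(1/q))) := by
      intro y hy
      rw [ENNReal.ofReal_rpow_of_pos (Real.rpow_pos_of_pos hy _), ← Real.rpow_mul hy.le]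
      congr 2; field_simp
    filter_upwards [hpos] with w hw
    rw [e _ hw]
    refine le_trans (le_of_eq ?_) ((h1 w.1 w.2 hw).trans (by gcongr; exact le_self_add))
    apply lintegral_congr_ae
    filter_upwards [hpos] with v hv
    rw [e _ hv]
  · have e : ∀ y : ℝ, 0 < y → ENNReal.ofReal (y ^ (-(1/(p*q)))) ^ q = ENNReal.ofReal (y ^ (-(1/p))) := by
      intro y hy
      rw [ENNReal.ofReal_rpow_of_pos (Real.rpow_pos_of_pos hy _), ← Real.rpow_mul hy.le]
      congr 2; field_simp
    filter_upwards [hpos] with w hw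
    rw [e _ hw]
    refine le_trans (le_of_eq ?_) ((h2 w.1 w.2 hw).trans (by gcongr; exact le_add_self))
    apply lintegral_congr_ae
    filter_upwards [hpos] with v hv
    rw [e _ hv]
    congr 1
    rw [PK_symm, add_comm]

end SchurPart2

section Assembly
variable {V : Type*} [NormedAddCommGroup V] [InnerProductSpace ℝ V] [FiniteDimensional ℝ V]
  [MeasurableSpace V] [BorelSpace V]

lemma slice_integrable (f : SchwartzMap (V × ℝ) ℂ) (s : ℝ) : Integrable (fun z : V => f (z, s)) := by
  have hg : Function.HasTemperateGrowth (fun z : V => ((z, s) : V × ℝ)) := by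
    have h := (ContinuousLinearMap.inl ℝ V ℝ).hasTemperateGrowth.add
      (Function.HasTemperateGrowth.const ((0, s) : V × ℝ))
    convert h using 2 with z
    simp
  have hu : ∃ (k : ℕ) (C : ℝ), ∀ z : V, ‖z‖ ≤ C * (1 + ‖((z, s) : V × ℝ)‖) ^ k := by
    refine ⟨1, 1, fun z => ?_⟩
    have : ‖z‖ ≤ ‖((z, s) : V × ℝ)‖ := norm_fst_le (z, s)
    linarith
  exact (SchwartzMap.compCLM ℝ hg hu f).integrable

lemma fubini_rep (m : V → ℂ) {c : ℝ} (hm : ContDiffOn ℝ ∞ m {0}ᶜ) (hb : ∀ ξ ≠ 0, ‖m ξ‖ ≤ c)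
    {t : ℝ} (ht : 0 < t) (x : V) (F : V → ℂ) (hF : Integrable F) :
    ∫ ξ : V, Complex.exp (Complex.I * (⟪x, ξ⟫ : ℂ)) * m ξ * (‖ξ‖ : ℂ) *
        Complex.exp (-(‖ξ‖ : ℂ) * (t : ℂ)) *
        (∫ z : V, Complex.exp (-Complex.I * (⟪z, ξ⟫ : ℂ)) * F z) =
    ∫ z : V, F z * ∫ ξ : V, Complex.exp (Complex.I * (⟪x - z, ξ⟫ : ℂ)) * m ξ * (‖ξ‖ : ℂ) *
        Complex.exp (-(‖ξ‖ : ℂ) * (t : ℂ)) := by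
  have hg := integrable_symbol hm hb ht
  set g : V → ℂ := fun ξ => m ξ * (‖ξ‖ : ℂ) * Complex.exp (-(‖ξ‖ : ℂ) * (t : ℂ)) with hgdef
  have e1 : ∀ ξ : V, Complex.exp (Complex.I * (⟪x, ξ⟫ : ℂ)) * m ξ * (‖ξ‖ : ℂ) *
        Complex.exp (-(‖ξ‖ : ℂ) * (t : ℂ)) *
        (∫ z : V, Complex.exp (-Complex.I * (⟪z, ξ⟫ : ℂ)) * F z) =
      ∫ z : V, Complex.exp (Complex.I * (⟪x - z, ξ⟫ : ℂ)) * (g ξ * F z) := by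
    intro ξ
    rw [← integral_const_mul]
    congr 1; ext z
    have : Complex.exp (Complex.I * (⟪x - z, ξ⟫ : ℂ)) =
        Complex.exp (Complex.I * (⟪x, ξ⟫ : ℂ)) * Complex.exp (-Complex.I * (⟪z, ξ⟫ : ℂ)) := by
      rw [← Complex.exp_add, inner_sub_left]; congr 1; push_cast; ring
    rw [this, hgdef]; ring
  simp only [e1]
  rw [integral_integral_swap]
  · congr 1; ext z
    rw [← integral_const_mul]
    congr 1; ext ξ
    rw [hgdef]; ring
  · simp only [Function.uncurry_def]
    refine Integrable.bdd_mul (c := 1) (hg.mul_prod hF) ?_ ?_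
    · apply Continuous.aestronglyMeasurable
      fun_prop
    · refine Filter.Eventually.of_forall fun z => ?_
      rw [mul_comm, Complex.norm_exp_ofReal_mul_I]

lemma pointwise_bound {c : ℝ} (m : V → ℂ) (hm : ContDiffOn ℝ ∞ m {0}ᶜ) (hb : ∀ ξ ≠ 0, ‖m ξ‖ ≤ c)
    (B : ENNReal) (hB : ∀ t : ℝ, 0 < t → ∀ x : V, ‖∫ ξ : V, Complex.exp (Complex.I * (⟪x, ξ⟫ : ℂ)) * m ξ * (‖ξ‖ : ℂ) *
        Complex.exp (-(‖ξ‖ : ℂ) * (t : ℂ))‖ₑ ≤ B * PK V x t)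
    (D : ℂ) (ς : ℝ) (f : SchwartzMap (V × ℝ) ℂ) (p : V × ℝ) (hp : 0 < p.2) :
    ‖∫ y in Set.Ioi (0 : ℝ), D * ∫ ξ : V,
                  Complex.exp (Complex.I * (⟪p.1, ξ⟫ : ℂ)) * m ξ * (‖ξ‖ : ℂ) *
                    Complex.exp (-(‖ξ‖ : ℂ) * ((p.2 : ℂ) + (y : ℂ))) *
                    (∫ z : V, Complex.exp (-Complex.I * (⟪z, ξ⟫ : ℂ)) * f (z, ς * y))‖ₑ ≤
    (‖D‖ₑ * B) * ∫⁻ w : V × ℝ, PK V (p.1 - w.1) (p.2 + w.2) * ‖f (w.1, ς * w.2)‖ₑ ∂(hM V) := by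
  have hmeas : Measurable (fun w : V × ℝ => PK V (p.1 - w.1) (p.2 + w.2) * ‖f (w.1, ς * w.2)‖ₑ) := by
    refine ((PK_measurable (V := V)).comp (f := fun w : V × ℝ => (p.1 - w.1, p.2 + w.2)) (by fun_prop)).mul ?_
    exact (f.continuous.comp (by fun_prop)).measurable.enorm
  unfold hM
  rw [lintegral_prod_symm _ hmeas.aemeasurable, ← lintegral_const_mul _ hmeas.lintegral_prod_left']
  refine (enorm_integral_le_lintegral_enorm _).trans ?_
  apply lintegral_mono_ae
  filter_upwards [ae_restrict_mem measurableSet_Ioi] with y hy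
  have hy : 0 < y := hy
  have ht : 0 < p.2 + y := by linarith
  have e := fubini_rep m hm hb ht p.1 _ (slice_integrable f (ς * y))
  push_cast at e
  rw [e, enorm_mul, mul_assoc]
  gcongr
  have hm3 : Measurable (fun z : V => PK V (p.1 - z) (p.2 + y) * ‖f (z, ς * y)‖ₑ) :=
    hmeas.comp (f := fun z : V => (z, y)) measurable_prodMk_right
  rw [← lintegral_const_mul _ hm3]
  refine (enorm_integral_le_lintegral_enorm _).trans ?_
  apply lintegral_mono
  intro z
  have := hB _ ht (p.1 - z)
  push_cast at this
  simp only [enorm_mul]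
  calc _ ≤ ‖f (z, ς * y)‖ₑ * (B * PK V (p.1 - z) (p.2 + y)) := by gcongr
    _ = _ := by ring

lemma hM_eq : (volume : Measure (V × ℝ)).restrict {p : V × ℝ | 0 < p.2} = hM V := by
  have : {p : V × ℝ | 0 < p.2} = Set.univ ×ˢ Set.Ioi (0:ℝ) := by ext p; simp
  rw [this, hM, Measure.volume_eq_prod, ← Measure.prod_restrict, Measure.restrict_univ]

lemma flip_lintegral (h : V × ℝ → ENNReal) {ς : ℝ} (hς : ς = 1 ∨ ς = -1) :
    ∫⁻ w : V × ℝ, h (w.1, ς * w.2) ∂(hM V) =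
      ∫⁻ w, h w ∂((volume : Measure (V × ℝ)).restrict {p : V × ℝ | 0 < ς * p.2}) := by
  rw [← hM_eq]
  rcases hς with rfl | rfl
  · simp
  · have hmp : MeasurePreserving (fun w : V × ℝ => (w.1, -w.2)) volume volume := by
      rw [Measure.volume_eq_prod]
      exact (MeasurePreserving.id _).prod (Measure.measurePreserving_neg _)
    have hme : MeasurableEmbedding (fun w : V × ℝ => (w.1, -w.2)) :=
      ((MeasurableEquiv.refl V).prodCongr (MeasurableEquiv.neg ℝ)).measurableEmbedding
    have := hmp.setLIntegral_comp_preimage_emb hme h {p : V × ℝ | 0 < -1 * p.2}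
    rw [← this]
    simp

lemma main_V (q : ℝ) (hq : 1 < q) (c : ℝ) (hc : 0 < c) (D : ℂ) :
    ∃ C : ℝ, 0 < C ∧
      ∀ m : V → ℂ, ContDiffOn ℝ ∞ m {0}ᶜ →
        (∀ ξ : V, ξ ≠ 0 → ∀ n : ℕ, n ≤ Module.finrank ℝ V + 1 →
          ‖iteratedFDeriv ℝ n m ξ‖ ≤ c * ‖ξ‖ ^ (-(n : ℝ))) →
      ∀ ς : ℝ, (ς = 1 ∨ ς = -1) →
      ∀ f : SchwartzMap (V × ℝ) ℂ,
        LqNorm (volume.restrict {p : V × ℝ | 0 < p.2}) q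
          (fun p =>
            ∫ y in Set.Ioi (0 : ℝ), D *
                ∫ ξ : V,
                  Complex.exp (Complex.I * (⟪p.1, ξ⟫ : ℂ)) * m ξ * (‖ξ‖ : ℂ) *
                    Complex.exp (-(‖ξ‖ : ℂ) * ((p.2 : ℂ) + (y : ℂ))) *
                    (∫ z : V, Complex.exp (-Complex.I * (⟪z, ξ⟫ : ℂ)) * f (z, ς * y))) ≤
          C * LqNorm (volume.restrict {p : V × ℝ | 0 < ς * p.2}) q (fun p => f p) := by
  obtain ⟨B, hBt, hB⟩ := kernel_bound (V := V) c hc.le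
  obtain ⟨A, hAt, hA⟩ := PK_Lq (V := V) hq
  have hq0 : 0 < q := by linarith
  have hKt : ‖D‖ₑ * B * A ≠ ⊤ := ENNReal.mul_ne_top (ENNReal.mul_ne_top enorm_ne_top hBt) hAt
  set K : ENNReal := ‖D‖ₑ * B * A with hK
  refine ⟨K.toReal + 1, by positivity, ?_⟩
  intro m hm hb ς hς f
  have hb0 : ∀ ξ : V, ξ ≠ 0 → ‖m ξ‖ ≤ c := by
    intro ξ hξ
    simpa using hb ξ hξ 0 (by omega)
  have hpw := pointwise_bound m hm hb0 B (hB m hm hb) D ς f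
  set T : V × ℝ → ℂ := fun p => ∫ y in Set.Ioi (0 : ℝ), D *
                ∫ ξ : V,
                  Complex.exp (Complex.I * (⟪p.1, ξ⟫ : ℂ)) * m ξ * (‖ξ‖ : ℂ) *
                    Complex.exp (-(‖ξ‖ : ℂ) * ((p.2 : ℂ) + (y : ℂ))) *
                    (∫ z : V, Complex.exp (-Complex.I * (⟪z, ξ⟫ : ℂ)) * f (z, ς * y)) with hT
  have hpos : ∀ᵐ w : V × ℝ ∂(hM V), 0 < w.2 := by
    rw [← hM_eq]
    exact ae_restrict_mem (measurableSet_lt measurable_const measurable_snd)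
  have hfm : Measurable (fun w : V × ℝ => ‖f (w.1, ς * w.2)‖ₑ) :=
    (f.continuous.comp (by fun_prop)).measurable.enorm
  have hAf := hA _ hfm
  rw [flip_lintegral (fun w => ‖f w‖ₑ ^ q) hς] at hAf
  have hfi : Integrable (fun p => ‖f p‖ ^ q) (volume.restrict {p : V × ℝ | 0 < ς * p.2}) := by
    have : (volume : Measure (V × ℝ)).IsAddHaarMeasure := by
      rw [Measure.volume_eq_prod]; infer_instance
    have h1 : MemLp f (ENNReal.ofReal q) (volume : Measure (V × ℝ)) := f.memLp _ _
    have h2 := h1.integrable_norm_rpow (by simpa using hq0) ENNReal.ofReal_ne_top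
    rw [ENNReal.toReal_ofReal hq0.le] at h2
    exact h2.restrict
  have hR : ∫⁻ w, ‖f w‖ₑ ^ q ∂(volume.restrict {p : V × ℝ | 0 < ς * p.2}) =
      ENNReal.ofReal (∫ w, ‖f w‖ ^ q ∂(volume.restrict {p : V × ℝ | 0 < ς * p.2})) := by
    rw [ofReal_integral_eq_lintegral_ofReal hfi (Filter.Eventually.of_forall fun w => by positivity)]
    apply lintegral_congr
    intro w
    rw [← ENNReal.ofReal_rpow_of_nonneg (norm_nonneg _) hq0.le, ofReal_norm]
  rw [hR] at hAf
  have hR0 : 0 ≤ ∫ w, ‖f w‖ ^ q ∂(volume.restrict {p : V × ℝ | 0 < ς * p.2}) :=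
    integral_nonneg fun w => by positivity
  unfold LqNorm
  set R := ∫ w, ‖f w‖ ^ q ∂(volume.restrict {p : V × ℝ | 0 < ς * p.2}) with hRd
  rw [hM_eq]
  have hL : ∫⁻ p, ‖T p‖ₑ ^ q ∂(hM V) ≤ K ^ q * ENNReal.ofReal R := by
    calc ∫⁻ p, ‖T p‖ₑ ^ q ∂(hM V) ≤ ∫⁻ p, (‖D‖ₑ * B) ^ q * (∫⁻ w : V × ℝ, PK V (p.1 - w.1) (p.2 + w.2) *
            ‖f (w.1, ς * w.2)‖ₑ ∂(hM V)) ^ q ∂(hM V) := by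
          apply lintegral_mono_ae
          filter_upwards [hpos] with p hp
          rw [← ENNReal.mul_rpow_of_nonneg _ _ hq0.le]
          exact ENNReal.rpow_le_rpow (hpw p hp) hq0.le
      _ = (‖D‖ₑ * B) ^ q * ∫⁻ p, (∫⁻ w : V × ℝ, PK V (p.1 - w.1) (p.2 + w.2) *
            ‖f (w.1, ς * w.2)‖ₑ ∂(hM V)) ^ q ∂(hM V) :=
          lintegral_const_mul' _ _ (ENNReal.rpow_ne_top_of_nonneg hq0.le
            (ENNReal.mul_ne_top enorm_ne_top hBt))
      _ ≤ (‖D‖ₑ * B) ^ q * (A ^ q * ENNReal.ofReal R) := by gcongr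
      _ = K ^ q * ENNReal.ofReal R := by
          rw [hK, ENNReal.mul_rpow_of_nonneg (‖D‖ₑ * B) A hq0.le, mul_assoc]
  have hLr : ∫ p, ‖T p‖ ^ q ∂(hM V) ≤ K.toReal ^ q * R := by
    have h1 := norm_integral_le_lintegral_norm (μ := hM V) (fun p => ‖T p‖ ^ q)
    have h2 : ∫⁻ p, ENNReal.ofReal ‖‖T p‖ ^ q‖ ∂(hM V) = ∫⁻ p, ‖T p‖ₑ ^ q ∂(hM V) := by
      apply lintegral_congr
      intro p
      rw [Real.norm_of_nonneg (by positivity), ← ENNReal.ofReal_rpow_of_nonneg (norm_nonneg _) hq0.le,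
        ofReal_norm]
    rw [h2] at h1
    have h3 := ENNReal.toReal_mono (ENNReal.mul_ne_top (ENNReal.rpow_ne_top_of_nonneg hq0.le hKt)
      ENNReal.ofReal_ne_top) hL
    rw [ENNReal.toReal_mul, ENNReal.toReal_ofReal hR0, ← ENNReal.toReal_rpow] at h3
    exact (le_abs_self _).trans (h1.trans h3)
  calc (∫ p, ‖T p‖ ^ q ∂(hM V)) ^ (1 / q) ≤ (K.toReal ^ q * R) ^ (1 / q) :=
        Real.rpow_le_rpow (integral_nonneg fun w => by positivity) hLr (by positivity)
    _ = K.toReal * R ^ (1 / q) := by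
        rw [Real.mul_rpow (by positivity) hR0, ← Real.rpow_mul ENNReal.toReal_nonneg,
          mul_one_div_cancel hq0.ne', Real.rpow_one]
    _ ≤ (K.toReal + 1) * R ^ (1 / q) := by
        gcongr
        linarith

end Assembly

/-- Lemma 2.4 (operator `M₁`): the operator built from a Mikhlin-type symbol `m(ξ')` and the
Poisson-type kernel `|ξ'| e^{-|ξ'|(x_N + y_N)}` is bounded from `L^q(ℝ^N_ς)` to
`L^q(ℝ^N_+)`, with norm controlled by the symbol bounds. -/
theorem stmt_16 (N : ℕ) (hN : 2 ≤ N) (q : ℝ) (hq : 1 < q) (c : ℝ) (hc : 0 < c) :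
    ∃ C : ℝ, 0 < C ∧
      ∀ m : EuclideanSpace ℝ (Fin (N - 1)) → ℂ,
        ContDiffOn ℝ (⊤ : ℕ∞) m {0}ᶜ →
        (∀ ξ : EuclideanSpace ℝ (Fin (N - 1)), ξ ≠ 0 → ∀ n : ℕ, n ≤ N + 1 →
          ‖iteratedFDeriv ℝ n m ξ‖ ≤ c * ‖ξ‖ ^ (-(n : ℝ))) →
      ∀ ς : ℝ, (ς = 1 ∨ ς = -1) →
      ∀ f : SchwartzMap (EuclideanSpace ℝ (Fin (N - 1)) × ℝ) ℂ,
        LqNorm (volume.restrict {p : EuclideanSpace ℝ (Fin (N - 1)) × ℝ | 0 < p.2}) q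
          (fun p =>
            ∫ y in Set.Ioi (0 : ℝ),
              (((2 * π) ^ (N - 1) : ℝ) : ℂ)⁻¹ *
                ∫ ξ : EuclideanSpace ℝ (Fin (N - 1)),
                  Complex.exp (Complex.I * (⟪p.1, ξ⟫ : ℂ)) * m ξ * (‖ξ‖ : ℂ) *
                    Complex.exp (-(‖ξ‖ : ℂ) * ((p.2 : ℂ) + (y : ℂ))) *
                    (∫ z : EuclideanSpace ℝ (Fin (N - 1)),
                      Complex.exp (-Complex.I * (⟪z, ξ⟫ : ℂ)) * f (z, ς * y))) ≤
          C * LqNorm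
              (volume.restrict {p : EuclideanSpace ℝ (Fin (N - 1)) × ℝ | 0 < ς * p.2}) q
              (fun p => f p) := by
  obtain ⟨C, hC, h⟩ := main_V (V := EuclideanSpace ℝ (Fin (N - 1))) q hq c hc
    (((2 * π) ^ (N - 1) : ℝ) : ℂ)⁻¹
  refine ⟨C, hC, fun m hm hb ς hς f => h m hm (fun ξ hξ n hn => hb ξ hξ n ?_) ς hς f⟩
  rw [finrank_euclideanSpace_fin] at hn
  omega
end

section
/- Let d ≥ 1 be an integer, σ ∈ (0, π/2), ρ > 0, and n ∈ ℕ. There exists a constant C = C(d, n, σ, ρ) > 0 such that for every λ ∈ ℂ with λ ≠ 0 and |arg λ| < π − σ, and every x ∈ ℝ^d with x ≠ 0, the following three bounds hold: ‖D^n(ξ ↦ λ/(ρλ + ‖ξ‖²))(x)‖ ≤ C ‖x‖^{−n}; for each coordinate index j, ‖D^n(ξ ↦ λ^{1/2} · i ξ_j/(ρλ + ‖ξ‖²))(x)‖ ≤ C ‖x‖^{−n}; and for all coordinate indices k, l, ‖D^n(ξ ↦ ξ_k ξ_l/(ρλ + ‖ξ‖²))(x)‖ ≤ C ‖x‖^{−n}.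 -/
open Real

def SB19 {E F : Type*} [NormedAddCommGroup E] [NormedSpace ℝ E] [NormedAddCommGroup F]
    [NormedSpace ℝ F] (N : ℕ) (f : E → F) (x : E) (A : ℝ) : Prop :=
  ∀ k ≤ N, ‖iteratedFDeriv ℝ k f x‖ * ‖x‖ ^ k ≤ A

section
variable {E F : Type*} [NormedAddCommGroup E] [NormedSpace ℝ E] [NormedAddCommGroup F]
    [NormedSpace ℝ F]

lemma SB19.smul [NormedSpace ℂ F] [IsScalarTower ℝ ℂ F] {N : ℕ} {f : E → ℂ} {g : E → F} {x : E}
    {A B : ℝ} (hf : SB19 N f x A) (hg : SB19 N g x B) (hfs : ContDiff ℝ (⊤ : ℕ∞) f)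
    (hgs : ContDiff ℝ (⊤ : ℕ∞) g) : SB19 N (fun y => f y • g y) x (2 ^ N * (A * B)) := by
  intro k hk
  have hA : 0 ≤ A := le_trans (by positivity) (hf 0 (Nat.zero_le _))
  have hB : 0 ≤ B := le_trans (by positivity) (hg 0 (Nat.zero_le _))
  have h := norm_iteratedFDeriv_smul_le hfs hgs x (n := k) (by exact_mod_cast le_top)
  calc _ ≤ (∑ i ∈ Finset.range (k + 1), (k.choose i : ℝ) * ‖iteratedFDeriv ℝ i f x‖ *
            ‖iteratedFDeriv ℝ (k - i) g x‖) * ‖x‖ ^ k := by gcongr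
    _ = ∑ i ∈ Finset.range (k + 1), (k.choose i : ℝ) * ((‖iteratedFDeriv ℝ i f x‖ * ‖x‖ ^ i) *
            (‖iteratedFDeriv ℝ (k - i) g x‖ * ‖x‖ ^ (k - i))) := by
        rw [Finset.sum_mul]
        refine Finset.sum_congr rfl fun i hi => ?_
        have : i + (k - i) = k := by have := Finset.mem_range.1 hi; omega
        rw [← this, pow_add, this]; ring
    _ ≤ ∑ i ∈ Finset.range (k + 1), (k.choose i : ℝ) * (A * B) := by
        refine Finset.sum_le_sum fun i hi => ?_
        have := Finset.mem_range.1 hi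
        have h1 := hf i (by omega)
        have h2 := hg (k - i) (by omega)
        gcongr
    _ = 2 ^ k * (A * B) := by
        rw [← Finset.sum_mul]
        have := Nat.sum_range_choose k
        congr 1
        exact_mod_cast this
    _ ≤ _ := by
        gcongr
        norm_num

lemma SB19.const (N : ℕ) (c : F) (x : E) : SB19 N (fun _ : E => c) x ‖c‖ := by
  intro k hk
  rcases k with _ | k
  · simp
  · simp [iteratedFDeriv_succ_const]

lemma SB19.linear (N : ℕ) (L : E →L[ℝ] F) (x : E) : SB19 N (fun y => L y) x (‖L‖ * ‖x‖) := by
  intro k hk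
  rcases k with _ | _ | k
  · simpa using L.le_opNorm x
  · rw [← norm_iteratedFDeriv_fderiv]
    have : fderiv ℝ (fun y => L y) = fun _ => L := by ext1 y; exact L.fderiv
    simp [this]
  · rw [← norm_iteratedFDeriv_fderiv]
    have : fderiv ℝ (fun y => L y) = fun _ => L := by ext1 y; exact L.fderiv
    rw [this, iteratedFDeriv_succ_const]
    simp; positivity

end

section
variable {E : Type*} [NormedAddCommGroup E] [InnerProductSpace ℝ E]

noncomputable def L19 (E : Type*) [NormedAddCommGroup E] [InnerProductSpace ℝ E] :
    E →L[ℝ] (E →L[ℝ] ℂ) :=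
  (-2 : ℝ) • ((ContinuousLinearMap.compL ℝ E ℝ ℂ Complex.ofRealCLM).comp (innerSL ℝ))

lemma smooth19 (a : ℂ) (h : ∀ y : E, a + (‖y‖ : ℂ) ^ 2 ≠ 0) :
    ContDiff ℝ (⊤ : ℕ∞) (fun y : E => (a + (‖y‖ : ℂ) ^ 2)⁻¹) := by
  refine ContDiff.inv ?_ h
  refine contDiff_const.add ?_
  have := Complex.ofRealCLM.contDiff.comp (contDiff_norm_sq ℝ (E := E) (n := (⊤ : ℕ∞)))
  have e : (fun y : E => (‖y‖ : ℂ) ^ 2) = Complex.ofRealCLM ∘ fun y : E => ‖y‖ ^ 2 := by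
    ext1 y
    simp
  rw [e]
  exact this

lemma fderiv19 (a : ℂ) (h : ∀ y : E, a + (‖y‖ : ℂ) ^ 2 ≠ 0) :
    fderiv ℝ (fun y : E => (a + (‖y‖ : ℂ) ^ 2)⁻¹) =
      fun y => (a + (‖y‖ : ℂ) ^ 2)⁻¹ • ((a + (‖y‖ : ℂ) ^ 2)⁻¹ • L19 E y) := by
  ext1 y
  have h1 : HasFDerivAt (fun y : E => a + (‖y‖ : ℂ) ^ 2)
      (Complex.ofRealCLM.comp (2 • (innerSL ℝ y).comp (ContinuousLinearMap.id ℝ E))) y := by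
    have h2 := (Complex.ofRealCLM.hasFDerivAt.comp y ((hasFDerivAt_id (𝕜 := ℝ) y).norm_sq)).const_add a
    have e : (fun y : E => a + (‖y‖ : ℂ) ^ 2) =
        fun y : E => a + (Complex.ofRealCLM ∘ fun y : E => ‖y‖ ^ 2) y := by
      ext1 y
      simp
    rw [e]
    exact h2
  have h3 := (hasFDerivAt_inv' (𝕜 := ℝ) (h y)).comp y h1
  refine (HasFDerivAt.fderiv h3).trans ?_
  ext v
  simp [L19]
  ring

lemma inv19 (M : ℝ) (hM : 0 ≤ M) (N : ℕ) : ∃ K : ℝ, 0 ≤ K ∧ ∀ (a : ℂ) (x : E),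
    (∀ y : E, a + (‖y‖ : ℂ) ^ 2 ≠ 0) → ‖x‖ ^ 2 ≤ M * ‖a + (‖x‖ : ℂ) ^ 2‖ →
    SB19 N (fun y : E => (a + (‖y‖ : ℂ) ^ 2)⁻¹) x (K * ‖a + (‖x‖ : ℂ) ^ 2‖⁻¹) := by
  induction N with
  | zero =>
    refine ⟨1, by norm_num, fun a x h hx k hk => ?_⟩
    obtain rfl : k = 0 := by omega
    simp
  | succ N ih =>
    obtain ⟨K, hK, ih⟩ := ih
    refine ⟨1 + 2 ^ N * (K * (2 ^ N * (K * ‖L19 E‖))) * M, by positivity, fun a x h hx k hk => ?_⟩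
    have hq : 0 < ‖a + (‖x‖ : ℂ) ^ 2‖ := norm_pos_iff.2 (h x)
    rcases k with _ | k
    · simp only [norm_iteratedFDeriv_zero, pow_zero, mul_one, norm_inv]
      refine le_mul_of_one_le_left (by positivity) ?_
      have : 0 ≤ 2 ^ N * (K * (2 ^ N * (K * ‖L19 E‖))) * M := by positivity
      linarith
    · rw [← norm_iteratedFDeriv_fderiv, fderiv19 a h]
      have hs := smooth19 a h
      have h1 := ih a x h hx
      have hl : ContDiff ℝ (⊤ : ℕ∞) (fun y => L19 E y) := (L19 E).contDiff
      have h2 := (h1.smul (h1.smul (SB19.linear N (L19 E) x) hs hl) hs (hs.smul hl)) k (by omega)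
      set Q := ‖a + (‖x‖ : ℂ) ^ 2‖
      rw [pow_succ, ← mul_assoc]
      refine (mul_le_mul_of_nonneg_right h2 (norm_nonneg x)).trans ?_
      calc _ = 2 ^ N * (K * (2 ^ N * (K * ‖L19 E‖))) * ‖x‖ ^ 2 * (Q⁻¹ * Q⁻¹) := by ring
        _ ≤ 2 ^ N * (K * (2 ^ N * (K * ‖L19 E‖))) * (M * Q) * (Q⁻¹ * Q⁻¹) := by gcongr
        _ = 2 ^ N * (K * (2 ^ N * (K * ‖L19 E‖))) * M * Q⁻¹ := by field_simp
        _ ≤ _ := by gcongr; linarith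
end

lemma sector19 (σ : ℝ) (hσ : σ ∈ Set.Ioo 0 (π / 2)) (ρ : ℝ) (hρ : 0 < ρ) :
    ∃ M : ℝ, 0 < M ∧ ∀ lam : ℂ, lam ≠ 0 → |lam.arg| < π - σ → ∀ s : ℝ, 0 ≤ s →
      (ρ : ℂ) * lam + s ≠ 0 ∧ ‖lam‖ ≤ M * ‖(ρ : ℂ) * lam + s‖ ∧
        s ≤ M * ‖(ρ : ℂ) * lam + s‖ := by
  obtain ⟨h0, h1⟩ := hσ
  have hc : cos σ < 1 := by
    rw [← cos_zero]
    exact cos_lt_cos_of_nonneg_of_le_pi le_rfl (by linarith [pi_pos]) h0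
  have hc0 : 0 < cos σ := cos_pos_of_mem_Ioo ⟨by linarith, h1⟩
  set δ := √((1 - cos σ) / 2) with hδ
  have hδ0 : 0 < δ := Real.sqrt_pos.2 (by linarith)
  have hδ2 : δ ^ 2 = (1 - cos σ) / 2 := Real.sq_sqrt (by linarith)
  refine ⟨1 / (δ * ρ) + 1 / δ, by positivity, fun lam hl ha s hs => ?_⟩
  have hl0 : 0 < ‖lam‖ := norm_pos_iff.2 hl
  have hre : -(cos σ) * ‖lam‖ ≤ lam.re := by
    have h2 : -cos σ ≤ cos lam.arg := by
      rw [← cos_pi_sub, ← cos_abs lam.arg]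
      exact cos_le_cos_of_nonneg_of_le_pi (abs_nonneg _) (by linarith) ha.le
    rw [← Complex.norm_mul_cos_arg lam, mul_comm]
    gcongr
  have hn : ‖(ρ : ℂ) * lam + s‖ ^ 2 = (ρ * ‖lam‖) ^ 2 + 2 * ρ * s * lam.re + s ^ 2 := by
    rw [mul_pow, Complex.sq_norm, Complex.sq_norm, Complex.normSq_apply, Complex.normSq_apply]
    simp
    ring
  have key : δ * (ρ * ‖lam‖ + s) ≤ ‖(ρ : ℂ) * lam + s‖ := by
    refine le_of_sq_le_sq ?_ (norm_nonneg _)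
    rw [hn, mul_pow, hδ2]
    have : 2 * ρ * s * (-(cos σ) * ‖lam‖) ≤ 2 * ρ * s * lam.re := by gcongr
    nlinarith [mul_nonneg (by linarith : 0 ≤ 1 + cos σ) (sq_nonneg (ρ * ‖lam‖ - s))]
  have hpos : 0 < ‖(ρ : ℂ) * lam + s‖ := lt_of_lt_of_le (by positivity) key
  refine ⟨norm_pos_iff.1 hpos, ?_, ?_⟩
  · calc ‖lam‖ ≤ 1 / (δ * ρ) * (δ * (ρ * ‖lam‖ + s)) := by
          have : 1 / (δ * ρ) * (δ * (ρ * ‖lam‖ + s)) = ‖lam‖ + s / ρ := by field_simp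
          rw [this]; have : 0 ≤ s / ρ := by positivity
          linarith
      _ ≤ 1 / (δ * ρ) * ‖(ρ : ℂ) * lam + s‖ := by gcongr
      _ ≤ _ := by gcongr; have : 0 < 1 / δ := by positivity
                  linarith
  · calc s ≤ 1 / δ * (δ * (ρ * ‖lam‖ + s)) := by
          have : 1 / δ * (δ * (ρ * ‖lam‖ + s)) = ρ * ‖lam‖ + s := by field_simp
          rw [this]; have : 0 ≤ ρ * ‖lam‖ := by positivity
          linarith
      _ ≤ 1 / δ * ‖(ρ : ℂ) * lam + s‖ := by gcongr
      _ ≤ _ := by gcongr; have : 0 < 1 / (δ * ρ) := by positivity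
                  linarith


/-- The Fourier-multiplier symbol estimates, uniform in `λ`, from the proof of Lemma 3.1:
the symbols `λ/(ρλ+|ξ|²)`, `λ^{1/2} iξ_j/(ρλ+|ξ|²)`, `ξ_kξ_l/(ρλ+|ξ|²)` satisfy
`‖D^n m(x)‖ ≤ C ‖x‖^{-n}` for `x ≠ 0`. -/
theorem stmt_19 (d : ℕ) (hd : 1 ≤ d) (σ : ℝ) (hσ : σ ∈ Set.Ioo 0 (π / 2))
    (ρ : ℝ) (hρ : 0 < ρ) (n : ℕ) :
    ∃ C : ℝ, 0 < C ∧ ∀ lam : ℂ, lam ≠ 0 → |lam.arg| < π - σ →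
      ∀ x : EuclideanSpace ℝ (Fin d), x ≠ 0 →
        ‖iteratedFDeriv ℝ n (fun ξ : EuclideanSpace ℝ (Fin d) =>
            lam / ((ρ : ℂ) * lam + (‖ξ‖ : ℂ) ^ 2)) x‖ ≤ C * ‖x‖ ^ (-(n : ℝ)) ∧
        (∀ j : Fin d,
          ‖iteratedFDeriv ℝ n (fun ξ : EuclideanSpace ℝ (Fin d) =>
              lam ^ ((1 : ℂ) / 2) * (Complex.I * (ξ j : ℂ)) /
                ((ρ : ℂ) * lam + (‖ξ‖ : ℂ) ^ 2)) x‖ ≤ C * ‖x‖ ^ (-(n : ℝ))) ∧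
        (∀ k l : Fin d,
          ‖iteratedFDeriv ℝ n (fun ξ : EuclideanSpace ℝ (Fin d) =>
              (ξ k : ℂ) * (ξ l : ℂ) /
                ((ρ : ℂ) * lam + (‖ξ‖ : ℂ) ^ 2)) x‖ ≤ C * ‖x‖ ^ (-(n : ℝ))) := by
  obtain ⟨M, hM, hsec⟩ := sector19 σ hσ ρ hρ
  obtain ⟨K, hK, hinv⟩ := inv19 (E := EuclideanSpace ℝ (Fin d)) M hM.le n
  refine ⟨2 ^ n * (2 ^ n * (K * M)) + 1, by positivity, fun lam hl ha x hx => ?_⟩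
  have hsec' : ∀ y : EuclideanSpace ℝ (Fin d), (ρ : ℂ) * lam + (‖y‖ : ℂ) ^ 2 ≠ 0 ∧
      ‖lam‖ ≤ M * ‖(ρ : ℂ) * lam + (‖y‖ : ℂ) ^ 2‖ ∧
        ‖y‖ ^ 2 ≤ M * ‖(ρ : ℂ) * lam + (‖y‖ : ℂ) ^ 2‖ := by
    intro y
    have := hsec lam hl ha (‖y‖ ^ 2) (by positivity)
    simpa using this
  have h0 := fun y => (hsec' y).1
  obtain ⟨hq0, hlq, hxq⟩ := hsec' x
  have hI := hinv _ x h0 hxq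
  have hIs := smooth19 _ h0
  have hx0 : 0 < ‖x‖ := norm_pos_iff.2 hx
  have hQ : 0 < ‖(ρ : ℂ) * lam + (‖x‖ : ℂ) ^ 2‖ := norm_pos_iff.2 hq0
  set Q := ‖(ρ : ℂ) * lam + (‖x‖ : ℂ) ^ 2‖ with hQdef
  have h2n : (1 : ℝ) ≤ 2 ^ n := one_le_pow₀ (by norm_num)
  have fin : ∀ (f : EuclideanSpace ℝ (Fin d) → ℂ) (A T : ℝ), SB19 n f x A →
      A ≤ 2 ^ n * (2 ^ n * (K * Q⁻¹ * T)) → 0 ≤ T → T ≤ M * Q →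
      ‖iteratedFDeriv ℝ n f x‖ ≤ (2 ^ n * (2 ^ n * (K * M)) + 1) * ‖x‖ ^ (-(n : ℝ)) := by
    intro f A T hf hA hT hTQ
    rw [rpow_neg hx0.le, rpow_natCast, ← div_eq_mul_inv, le_div_iff₀ (by positivity)]
    refine (hf n le_rfl).trans (hA.trans ?_)
    calc 2 ^ n * (2 ^ n * (K * Q⁻¹ * T)) ≤ 2 ^ n * (2 ^ n * (K * Q⁻¹ * (M * Q))) := by gcongr
      _ = 2 ^ n * (2 ^ n * (K * M)) := by field_simp
      _ ≤ _ := by linarith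
  let P : Fin d → EuclideanSpace ℝ (Fin d) →L[ℝ] ℂ := fun j =>
    Complex.ofRealCLM.comp (EuclideanSpace.proj j)
  have hP : ∀ j, ‖P j‖ ≤ 1 := fun j =>
    ContinuousLinearMap.opNorm_le_bound _ zero_le_one fun y => by
      simpa [P] using PiLp.norm_apply_le y j
  have hPs : ∀ j, ContDiff ℝ (⊤ : ℕ∞) (fun y => P j y) := fun j => (P j).contDiff
  have hPb : ∀ j, SB19 n (fun y => P j y) x ‖x‖ := fun j k hk =>
    (SB19.linear n (P j) x k hk).trans (by
      have := hP j
      nlinarith)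
  refine ⟨?_, fun j => ?_, fun k l => ?_⟩
  · have h := (SB19.const n lam x).smul hI contDiff_const hIs
    simp only [smul_eq_mul, ← div_eq_mul_inv] at h
    refine fin _ _ ‖lam‖ h ?_ (norm_nonneg _) hlq
    have : 0 ≤ K * Q⁻¹ * ‖lam‖ := by positivity
    rw [div_eq_mul_inv]
    have e : ‖lam‖ * (K * Q⁻¹) = K * Q⁻¹ * ‖lam‖ := by ring
    rw [e]
    refine mul_le_mul_of_nonneg_left ?_ (by positivity)
    exact le_mul_of_one_le_left this h2n
  · have h := (SB19.const n (lam ^ ((1 : ℂ) / 2) * Complex.I) x).smul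
      ((hPb j).smul hI (hPs j) hIs) contDiff_const ((hPs j).smul hIs)
    have e : (fun ξ : EuclideanSpace ℝ (Fin d) =>
              lam ^ ((1 : ℂ) / 2) * (Complex.I * (ξ j : ℂ)) /
                ((ρ : ℂ) * lam + (‖ξ‖ : ℂ) ^ 2)) = fun y => (lam ^ ((1 : ℂ) / 2) * Complex.I) •
          (P j y • ((ρ : ℂ) * lam + (‖y‖ : ℂ) ^ 2)⁻¹) := by
      ext1 y
      simp [P, div_eq_mul_inv]
      ring
    rw [e]
    have hsq : ‖lam ^ ((1 : ℂ) / 2)‖ ^ 2 = ‖lam‖ := by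
      rw [← norm_pow]
      congr 1
      have := Complex.cpow_nat_inv_pow lam (n := 2) (by norm_num)
      simpa using this
    refine fin _ _ (‖lam ^ ((1 : ℂ) / 2)‖ * ‖x‖) h (le_of_eq ?_) (by positivity) ?_
    · simp only [norm_mul, Complex.norm_I]; ring
    · refine le_of_sq_le_sq ?_ (by positivity)
      rw [mul_pow, hsq, sq (M * Q)]
      gcongr
  · have h := (hPb k).smul ((hPb l).smul hI (hPs l) hIs) (hPs k) ((hPs l).smul hIs)
    have e : (fun ξ : EuclideanSpace ℝ (Fin d) => (ξ k : ℂ) * (ξ l : ℂ) /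
                ((ρ : ℂ) * lam + (‖ξ‖ : ℂ) ^ 2)) = fun y => P k y •
          (P l y • ((ρ : ℂ) * lam + (‖y‖ : ℂ) ^ 2)⁻¹) := by
      ext1 y
      simp [P, div_eq_mul_inv]
      ring
    rw [e]
    exact fin _ _ (‖x‖ ^ 2) h (le_of_eq (by ring)) (by positivity) hxq
end
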